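/- arXiv:2507.14354 — 7 statements merged into one kernel-verified Lean document; each statement's English description precedes it below -/
import Mathlib

section
/- Gradient of the innovations loss (Theorem 1). Fix a gain L₀ ∈ ℝ^{n×p}. Suppose 𝒫 : ℝ^{n×p} → ℝ^{n×n} is Fréchet differentiable at L₀, each 𝒫(L) is symmetric, and 𝒫 satisfies the Lyapunov equation 𝒫(L) = F(L) 𝒫(L) F(L)^T + Q_η(L) for every L in some open neighborhood of L₀. Let W be a symmetric real n×n matrix satisfying W = F(L₀)^T W F(L₀) + A^T C^T C A. Define J(L) := Tr(C A 𝒫(L) A^T C^T). Then J is differentiable at L₀ and its gradient with respect to the Frobenius inner product — i.e., the unique matrix G with (fderiv J L₀)(V) = Tr(G^T V) for all V ∈ ℝ^{n×p} — is G = −2 W ( F(L₀) 𝒫(L₀) A^T C^T + (I − L₀ C) Q_w C^T − L₀ R_v ). -/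
/-!
The adjoint method. Restrict to the line `t ↦ L₀ + t V`, put `F = (I - L₀ C) A` and
`Y = F P(L₀) Aᵀ Cᵀ + (I - L₀ C) Q_w Cᵀ - L₀ R_v`, and let `D` be the derivative of `P` at `L₀`
in the direction `V`. Differentiating the Lyapunov equation along the line
(`HasDerivAt.matrix_mul_rect` is the product rule used) gives `D = F D Fᵀ - V Yᵀ - Y Vᵀ`;
symmetry of `P(L₀)`, `Q_w` and `R_v` is what pairs the terms up as a matrix and its transpose.
By the dual equation for `W` and cyclicity of the trace, the derivative of the loss is
`Tr(Aᵀ Cᵀ C A D) = Tr((W - Fᵀ W F) D) = Tr(W (D - F D Fᵀ)) = -Tr(W (V Yᵀ + Y Vᵀ))`, which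
equals `-2 Tr((W Y)ᵀ V)` because `W` is symmetric. The unknown `D` is thereby eliminated.
-/

open Matrix

attribute [local instance] Matrix.frobeniusNormedAddCommGroup Matrix.frobeniusNormedSpace

/-- The product rule for curves of rectangular matrices. -/
theorem HasDerivAt.matrix_mul_rect {l m k : ℕ} {f : ℝ → Matrix (Fin l) (Fin m) ℝ}
    {g : ℝ → Matrix (Fin m) (Fin k) ℝ} {df : Matrix (Fin l) (Fin m) ℝ}
    {dg : Matrix (Fin m) (Fin k) ℝ} {t : ℝ} (hf : HasDerivAt f df t) (hg : HasDerivAt g dg t) :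
    HasDerivAt (fun s => f s * g s) (f t * dg + df * g t) t := by
  -- Submultiplicativity of the Frobenius norm makes multiplication a bounded bilinear map.
  have hb : IsBoundedBilinearMap ℝ
      (fun q : Matrix (Fin l) (Fin m) ℝ × Matrix (Fin m) (Fin k) ℝ => q.1 * q.2) :=
    { add_left := fun x y z => Matrix.add_mul x y z
      smul_left := fun c x y => Matrix.smul_mul c x y
      add_right := fun x y z => Matrix.mul_add x y z
      smul_right := fun c x y => Matrix.mul_smul x c y
      bound := ⟨1, one_pos, fun x y => by
        simpa using Matrix.frobenius_norm_mul x y⟩ }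
  exact (hb.hasFDerivAt (f t, g t)).comp_hasDerivAt t (hf.prodMk hg)

theorem HasDerivAt.matrix_transpose_curve {l m : ℕ} {f : ℝ → Matrix (Fin l) (Fin m) ℝ}
    {df : Matrix (Fin l) (Fin m) ℝ} {t : ℝ} (hf : HasDerivAt f df t) :
    HasDerivAt (fun s => (f s)ᵀ) dfᵀ t :=
  (LinearMap.toContinuousLinearMap
    (Matrix.transposeLinearEquiv (Fin l) (Fin m) ℝ ℝ).toLinearMap).hasFDerivAt.comp_hasDerivAt t hf

/-- The trace computation behind the gradient formula: a solution `D` of the differentiated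
Lyapunov equation `D = F D Fᵀ - V Yᵀ - Y Vᵀ` is tested against `S` through the solution `W` of the
dual equation `W = Fᵀ W F + S`. -/
theorem trace_dual_lyapunov {n p : ℕ} {F D W S : Matrix (Fin n) (Fin n) ℝ}
    {V Y : Matrix (Fin n) (Fin p) ℝ} (hWsymm : W.IsSymm) (hW : W = Fᵀ * W * F + S)
    (hD : D = F * D * Fᵀ - V * Yᵀ - Y * Vᵀ) :
    (S * D).trace = (((-2 : ℝ) • (W * Y))ᵀ * V).trace := by
  have h₁ : (W * D).trace = (Fᵀ * W * F * D).trace + (S * D).trace := by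
    conv_lhs => rw [hW]
    rw [Matrix.add_mul, Matrix.trace_add]
  have h₂ : (W * D).trace =
      (W * (F * D * Fᵀ)).trace - (W * (V * Yᵀ)).trace - (W * (Y * Vᵀ)).trace := by
    conv_lhs => rw [hD]
    rw [Matrix.mul_sub, Matrix.mul_sub, Matrix.trace_sub, Matrix.trace_sub]
  have h₃ : (W * (F * D * Fᵀ)).trace = (Fᵀ * W * F * D).trace := by
    rw [← Matrix.mul_assoc, Matrix.trace_mul_comm]
    simp only [Matrix.mul_assoc]
  have h₄ : (W * (V * Yᵀ)).trace = ((W * Y)ᵀ * V).trace := by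
    rw [← Matrix.mul_assoc, Matrix.trace_mul_comm, Matrix.transpose_mul, hWsymm.eq,
      Matrix.mul_assoc]
  have h₅ : (W * (Y * Vᵀ)).trace = ((W * Y)ᵀ * V).trace := by
    rw [← Matrix.trace_transpose ((W * Y)ᵀ * V), Matrix.transpose_mul, Matrix.transpose_transpose,
      ← Matrix.mul_assoc, Matrix.trace_mul_comm]
  rw [Matrix.transpose_smul, Matrix.smul_mul, Matrix.trace_smul, smul_eq_mul]
  linarith

/-- The Lyapunov equation differentiated at `L₀` in the direction `V`. -/
theorem fderiv_lyapunov {n p : ℕ} {A : Matrix (Fin n) (Fin n) ℝ} {C : Matrix (Fin p) (Fin n) ℝ}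
    {Qw : Matrix (Fin n) (Fin n) ℝ} (hQ : Qwᵀ = Qw) {Rv : Matrix (Fin p) (Fin p) ℝ}
    (hR : Rvᵀ = Rv) {L₀ : Matrix (Fin n) (Fin p) ℝ}
    {P : Matrix (Fin n) (Fin p) ℝ → Matrix (Fin n) (Fin n) ℝ}
    (hdiff : DifferentiableAt ℝ P L₀) (hsymm : (P L₀).IsSymm)
    (hlyap : ∀ᶠ L in nhds L₀,
      P L = ((1 - L * C) * A) * P L * ((1 - L * C) * A)ᵀ
              + ((1 - L * C) * Qw * (1 - L * C)ᵀ + L * Rv * Lᵀ))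
    (V : Matrix (Fin n) (Fin p) ℝ) :
    fderiv ℝ P L₀ V = ((1 - L₀ * C) * A) * fderiv ℝ P L₀ V * ((1 - L₀ * C) * A)ᵀ
      - V * (((1 - L₀ * C) * A) * P L₀ * Aᵀ * Cᵀ + (1 - L₀ * C) * Qw * Cᵀ - L₀ * Rv)ᵀ
      - (((1 - L₀ * C) * A) * P L₀ * Aᵀ * Cᵀ + (1 - L₀ * C) * Qw * Cᵀ - L₀ * Rv) * Vᵀ := by
  have hγ : HasDerivAt (fun t : ℝ => L₀ + t • V) V 0 := by
    exact (((hasDerivAt_id (0 : ℝ)).smul_const V).const_add L₀).congr_deriv (one_smul ℝ V)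
  have hγ₀ : L₀ + (0 : ℝ) • V = L₀ := by simp
  have hP : HasDerivAt (fun t : ℝ => P (L₀ + t • V)) (fderiv ℝ P L₀ V) 0 :=
    HasFDerivAt.comp_hasDerivAt (0 : ℝ) (hγ₀.symm ▸ hdiff.hasFDerivAt) hγ
  have hK : HasDerivAt (fun t : ℝ => 1 - (L₀ + t • V) * C) (-(V * C)) 0 := by
    exact ((hγ.matrix_mul_rect (hasDerivAt_const (0 : ℝ) C)).const_sub 1).congr_deriv (by simp)
  have hF : HasDerivAt (fun t : ℝ => (1 - (L₀ + t • V) * C) * A) (-(V * C) * A) 0 := by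
    exact (hK.matrix_mul_rect (hasDerivAt_const (0 : ℝ) A)).congr_deriv (by simp)
  have hrhs := ((hF.matrix_mul_rect hP).matrix_mul_rect hF.matrix_transpose_curve).add
    (((hK.matrix_mul_rect (hasDerivAt_const (0 : ℝ) Qw)).matrix_mul_rect hK.matrix_transpose_curve).add
      ((hγ.matrix_mul_rect (hasDerivAt_const (0 : ℝ) Rv)).matrix_mul_rect hγ.matrix_transpose_curve))
  have hev : ∀ᶠ t : ℝ in nhds 0, P (L₀ + t • V) = _ :=
    hγ.continuousAt.eventually (hγ₀.symm ▸ hlyap)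
  have hD := hP.unique (hrhs.congr_of_eventuallyEq hev)
  rw [hγ₀] at hD
  refine hD.trans ?_
  generalize 1 - L₀ * C = K
  simp only [Matrix.transpose_mul, Matrix.transpose_add, Matrix.transpose_sub,
    Matrix.transpose_neg, Matrix.transpose_transpose, hsymm.eq, hQ, hR,
    Matrix.mul_add, Matrix.add_mul, Matrix.mul_sub, Matrix.sub_mul, Matrix.neg_mul,
    Matrix.mul_neg, Matrix.mul_zero, zero_add, Matrix.mul_assoc]
  abel

/-- **Gradient of the innovations loss (Theorem 1).**
Suppose `P` is Fréchet differentiable at `L₀`, every `P L` is symmetric, and `P` satisfies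
the Lyapunov equation `P(L) = F(L) P(L) F(L)ᵀ + Q_η(L)` on a neighborhood of `L₀`,
where `F(L) = (I − L C) A` and `Q_η(L) = (I − L C) Q_w (I − L C)ᵀ + L R_v Lᵀ`.
If `W` is symmetric with `W = F(L₀)ᵀ W F(L₀) + Aᵀ Cᵀ C A` and
`J(L) = Tr(C A P(L) Aᵀ Cᵀ)`, then `J` is differentiable at `L₀` and its gradient with
respect to the Frobenius inner product is
`G = −2 W (F(L₀) P(L₀) Aᵀ Cᵀ + (I − L₀ C) Q_w Cᵀ − L₀ R_v)`. -/
theorem gradient_innovations_loss {n p : ℕ}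
    (A : Matrix (Fin n) (Fin n) ℝ) (C : Matrix (Fin p) (Fin n) ℝ)
    (Qw : Matrix (Fin n) (Fin n) ℝ) (hQw : Qw.PosDef)
    (Rv : Matrix (Fin p) (Fin p) ℝ) (hRv : Rv.PosDef)
    (L₀ : Matrix (Fin n) (Fin p) ℝ)
    (P : Matrix (Fin n) (Fin p) ℝ → Matrix (Fin n) (Fin n) ℝ)
    (hdiff : DifferentiableAt ℝ P L₀)
    (hsymm : ∀ L, (P L).IsSymm)
    (hlyap : ∀ᶠ L in nhds L₀,
      P L = ((1 - L * C) * A) * P L * ((1 - L * C) * A)ᵀ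
              + ((1 - L * C) * Qw * (1 - L * C)ᵀ + L * Rv * Lᵀ))
    (W : Matrix (Fin n) (Fin n) ℝ) (hWsymm : W.IsSymm)
    (hW : W = ((1 - L₀ * C) * A)ᵀ * W * ((1 - L₀ * C) * A) + Aᵀ * Cᵀ * C * A) :
    DifferentiableAt ℝ (fun L => (C * A * P L * Aᵀ * Cᵀ).trace) L₀ ∧
    ∀ V : Matrix (Fin n) (Fin p) ℝ,
      fderiv ℝ (fun L => (C * A * P L * Aᵀ * Cᵀ).trace) L₀ V
        = (((-2 : ℝ) • (W * (((1 - L₀ * C) * A) * P L₀ * Aᵀ * Cᵀ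
              + (1 - L₀ * C) * Qw * Cᵀ - L₀ * Rv)))ᵀ * V).trace := by
  have hQ : Qwᵀ = Qw := by simpa [Matrix.IsHermitian] using hQw.isHermitian
  have hR : Rvᵀ = Rv := by simpa [Matrix.IsHermitian] using hRv.isHermitian
  -- The loss as a linear functional of `P L`.
  let T : Matrix (Fin n) (Fin n) ℝ →L[ℝ] ℝ := LinearMap.toContinuousLinearMap
    (Matrix.traceLinearMap (Fin n) ℝ ℝ ∘ₗ LinearMap.mulLeft ℝ (Aᵀ * Cᵀ * C * A))
  have hT : ∀ X, T X = (Aᵀ * Cᵀ * C * A * X).trace := fun X => rfl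
  have hJ : (fun L => (C * A * P L * Aᵀ * Cᵀ).trace) = fun L => T (P L) := by
    funext L
    rw [hT, Matrix.mul_assoc (C * A * P L), Matrix.trace_mul_comm]
    simp only [Matrix.mul_assoc]
  have hJd : HasFDerivAt (fun L => T (P L)) (T.comp (fderiv ℝ P L₀)) L₀ :=
    T.hasFDerivAt.comp L₀ hdiff.hasFDerivAt
  rw [hJ]
  refine ⟨hJd.differentiableAt, fun V => ?_⟩
  rw [hJd.fderiv, ContinuousLinearMap.comp_apply, hT]
  exact trace_dual_lyapunov hWsymm hW (fderiv_lyapunov hQ hR hdiff (hsymm L₀) hlyap V)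
end

section
/- Domination of one positive semidefinite quadratic form by another (Lemma on quadratic forms). Let M and N be real symmetric positive semidefinite n×n matrices such that for all x ∈ ℝ^n, x^T N x = 0 implies x^T M x = 0. Then there exists a real constant β < ∞ such that x^T M x ≤ β · x^T N x for all x ∈ ℝ^n. -/
open Matrix

/-!
Write `M = Bᵀ B` and `N = Aᵀ A`, so that `xᵀ M x = |B x|²` and `xᵀ N x = |A x|²`. The hypothesis
says `ker A ⊆ ker B`, hence `B = C A` for some matrix `C` (`exists_matrix_factor`), and the
Cauchy–Schwarz inequality bounds `|C y|²` by `‖C‖_F² |y|²` with the Frobenius norm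
(`mulVec_dotProduct_self_le`). So `β = ‖C‖_F²` works.
-/

open scoped MatrixOrder in
theorem exists_gram_factor {n : ℕ} {N : Matrix (Fin n) (Fin n) ℝ} (hN : N.PosSemidef) :
    ∃ A : Matrix (Fin n) (Fin n) ℝ, ∀ x, x ⬝ᵥ N *ᵥ x = (A *ᵥ x) ⬝ᵥ (A *ᵥ x) := by
  obtain ⟨A, rfl⟩ := CStarAlgebra.nonneg_iff_eq_star_mul_self.mp hN.nonneg
  refine ⟨A, fun x => ?_⟩
  rw [← mulVec_mulVec, dotProduct_mulVec, star_eq_conjTranspose, vecMul_conjTranspose]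
  simp

theorem exists_matrix_factor {n : ℕ} (A B : Matrix (Fin n) (Fin n) ℝ)
    (h : ∀ x, A *ᵥ x = 0 → B *ᵥ x = 0) :
    ∃ C : Matrix (Fin n) (Fin n) ℝ, ∀ x, B *ᵥ x = C *ᵥ (A *ᵥ x) := by
  -- A linear section `s` of `A` onto its range; `C` extends `B ∘ s` to the whole space.
  obtain ⟨s, hs⟩ := A.mulVecLin.rangeRestrict.exists_rightInverse_of_surjective
    (LinearMap.range_rangeRestrict _)
  obtain ⟨c, hc⟩ := LinearMap.exists_extend (B.mulVecLin ∘ₗ s)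
  refine ⟨LinearMap.toMatrix' c, fun x => ?_⟩
  rw [LinearMap.toMatrix'_mulVec]
  have h1 : c (A *ᵥ x) = B *ᵥ s (A.mulVecLin.rangeRestrict x) :=
    LinearMap.congr_fun hc (A.mulVecLin.rangeRestrict x)
  have h2 : A *ᵥ s (A.mulVecLin.rangeRestrict x) = A *ᵥ x :=
    congrArg Subtype.val (LinearMap.congr_fun hs (A.mulVecLin.rangeRestrict x))
  have h3 := h (x - s (A.mulVecLin.rangeRestrict x)) (by rw [mulVec_sub, h2, sub_self])
  rw [mulVec_sub, sub_eq_zero] at h3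
  rw [h1, h3]

theorem mulVec_dotProduct_self_le {n : ℕ} (C : Matrix (Fin n) (Fin n) ℝ) (y : Fin n → ℝ) :
    (C *ᵥ y) ⬝ᵥ (C *ᵥ y) ≤ (∑ i, ∑ j, C i j ^ 2) * (y ⬝ᵥ y) := by
  simp only [dotProduct, mulVec, ← sq]
  rw [Finset.sum_mul]
  exact Finset.sum_le_sum fun i _ => Finset.sum_mul_sq_le_sq_mul_sq _ _ _

/-- **Domination of one positive semidefinite quadratic form by another.**
If `M, N` are real symmetric PSD matrices and every `x` with `xᵀ N x = 0`
also satisfies `xᵀ M x = 0`, then there is a real constant `β` with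
`xᵀ M x ≤ β · xᵀ N x` for all `x`. -/
theorem quadratic_form_domination {n : ℕ}
    (M N : Matrix (Fin n) (Fin n) ℝ)
    (hM : M.PosSemidef) (hN : N.PosSemidef)
    (h : ∀ x : Fin n → ℝ, x ⬝ᵥ N.mulVec x = 0 → x ⬝ᵥ M.mulVec x = 0) :
    ∃ β : ℝ, ∀ x : Fin n → ℝ, x ⬝ᵥ M.mulVec x ≤ β * (x ⬝ᵥ N.mulVec x) := by
  obtain ⟨A, hA⟩ := exists_gram_factor hN
  obtain ⟨B, hB⟩ := exists_gram_factor hM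
  simp only [hA, hB, dotProduct_self_eq_zero] at h ⊢
  obtain ⟨C, hC⟩ := exists_matrix_factor A B h
  refine ⟨∑ i, ∑ j, C i j ^ 2, fun x => ?_⟩
  rw [hC]
  exact mulVec_dotProduct_self_le C _
end

section
/- Coercivity of the one-step-ahead prediction loss (Expanded Coercivity Lemma, part 1). Assume the pair (A, C) is observable. Let (L_j) be a sequence of real n×p matrices such that for each j every complex eigenvalue of A − L_j C has modulus < 1, and let P_j be a symmetric positive semidefinite real n×n matrix satisfying P_j = (A − L_j C) P_j (A − L_j C)^T + Q_w + L_j R_v L_j^T. Define J_pred(L_j) := Tr(C P_j C^T) + Tr(R_v). If either ‖L_j‖_F → ∞ or the spectral radius of A − L_j C (the maximum modulus of its complex eigenvalues) tends to 1, then J_pred(L_j) → ∞. -/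
/-!
Write `F_j = A - L_j C` and `φ_j(u) = uᵀ P_j u`. The Lyapunov equation reads
`φ_j(u) = φ_j(F_jᵀ u) + uᵀ Q_w u + (L_jᵀ u)ᵀ R_v (L_jᵀ u)`, so `φ_j(u)` bounds `φ_j(F_jᵀ u)`,
`|u|²` and `|L_jᵀ u|²` up to constants independent of `j`.

Restrict to the indices `j` with `Tr(C P_j Cᵀ) ≤ B`, and let `W` be the subspace of those `u` for
which `φ_j(u)` is bounded over these `j`. Then `W` contains the range of `Cᵀ`, since
`φ_j(Cᵀ y) ≤ B |y|²`. It is also `Aᵀ`-invariant: in `Aᵀ u = F_jᵀ u + Cᵀ (L_jᵀ u)` the first term has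
`φ_j ≤ φ_j(u)` and the second has `φ_j ≤ B |L_jᵀ u|²`, which `φ_j(u)` controls. Observability gives
`W = ℝⁿ` (`eq_top_of_observable`), hence `Tr P_j` is bounded by a constant `K` over these `j`
(`trace_bound`).

A bound on `Tr P_j` bounds `‖L_j‖_F` because `P_j ≥ L_j R_v L_jᵀ`, and keeps the spectral radius
away from `1` by testing the Lyapunov equation on a left eigenvector (`eigenvalue_bound`). Either
blow-up hypothesis therefore forces `Tr(C P_j Cᵀ) > B` eventually, for every `B`.
-/

open Matrix Filter

/-- The Frobenius norm of a real matrix. -/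
noncomputable def frobNorm {m p : ℕ} (M : Matrix (Fin m) (Fin p) ℝ) : ℝ :=
  Real.sqrt (∑ i, ∑ j, (M i j) ^ 2)

/-- The smallest value `r` of the form on the (compact) Euclidean unit sphere is positive and
bounds the form below by homogeneity; for `m = 0` the sphere is empty and any `r` works. -/
lemma posDef_lower {m : ℕ} {R : Matrix (Fin m) (Fin m) ℝ} (hR : R.PosDef) :
    ∃ r : ℝ, 0 < r ∧ ∀ x : Fin m → ℝ, r * (x ⬝ᵥ x) ≤ x ⬝ᵥ R *ᵥ x := by
  have hc : IsCompact {x : Fin m → ℝ | x ⬝ᵥ x = 1} := by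
    refine Metric.isCompact_of_isClosed_isBounded
      (isClosed_eq (by fun_prop) continuous_const) ?_
    refine (Metric.isBounded_closedBall (x := (0 : Fin m → ℝ)) (r := 1)).subset ?_
    intro x hx
    rw [mem_closedBall_zero_iff, pi_norm_le_iff_of_nonneg zero_le_one]
    intro i
    have h1 : x i * x i ≤ x ⬝ᵥ x :=
      Finset.single_le_sum (f := fun i => x i * x i) (fun i _ => mul_self_nonneg _)
        (Finset.mem_univ i)
    rw [Set.mem_ofPred_eq] at hx
    rw [Real.norm_eq_abs, abs_le_one_iff_mul_self_le_one]
    linarith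
  have hpos : ∀ x : Fin m → ℝ, x ≠ 0 → 0 < x ⬝ᵥ R *ᵥ x := fun x hx => by
    simpa using hR.dotProduct_mulVec_pos hx
  obtain ⟨r, hr, h⟩ : ∃ r : ℝ, 0 < r ∧ ∀ x : Fin m → ℝ, x ⬝ᵥ x = 1 → r ≤ x ⬝ᵥ R *ᵥ x := by
    rcases Set.eq_empty_or_nonempty {x : Fin m → ℝ | x ⬝ᵥ x = 1} with he | hne
    · refine ⟨1, one_pos, fun x hx => ?_⟩
      have : x ∈ {x : Fin m → ℝ | x ⬝ᵥ x = 1} := hx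
      simp [he] at this
    · obtain ⟨x₀, hx₀, hmin⟩ := hc.exists_isMinOn hne
        (f := fun x => x ⬝ᵥ R *ᵥ x) (Continuous.continuousOn (by fun_prop))
      refine ⟨_, hpos x₀ ?_, fun x hx => hmin hx⟩
      rintro rfl
      simp at hx₀
  refine ⟨r, hr, fun x => ?_⟩
  by_cases hx : x = 0
  · simp [hx]
  have hs : 0 < x ⬝ᵥ x := by
    simpa using dotProduct_star_self_pos_iff.2 hx
  have hq : (√(x ⬝ᵥ x)) ^ 2 = x ⬝ᵥ x := Real.sq_sqrt hs.le
  have hq0 : √(x ⬝ᵥ x) ≠ 0 := (Real.sqrt_pos.2 hs).ne'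
  have := h ((√(x ⬝ᵥ x))⁻¹ • x) (by
    simp only [smul_dotProduct, dotProduct_smul, smul_eq_mul]
    field_simp
    exact hq.symm)
  simp only [smul_dotProduct, dotProduct_smul, mulVec_smul, smul_eq_mul] at this
  rw [← mul_assoc, ← mul_inv, ← sq, hq, inv_mul_eq_div, le_div_iff₀ hs] at this
  exact this

open scoped MatrixOrder in
/-- Cauchy–Schwarz applied to the rows of a factor `B` of `P = Bᵀ B`. -/
lemma quad_le_trace {m : ℕ} {P : Matrix (Fin m) (Fin m) ℝ} (hP : P.PosSemidef)
    (x : Fin m → ℝ) : x ⬝ᵥ P *ᵥ x ≤ P.trace * (x ⬝ᵥ x) := by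
  obtain ⟨B, rfl⟩ := CStarAlgebra.nonneg_iff_eq_star_mul_self.1 hP.nonneg
  have h1 : x ⬝ᵥ (star B * B) *ᵥ x = ∑ i, (∑ j, B i j * x j) ^ 2 := by
    rw [← mulVec_mulVec, dotProduct_mulVec, star_eq_conjTranspose, conjTranspose_eq_transpose_of_trivial, vecMul_transpose]
    simp [dotProduct, mulVec, sq]
  have h2 : (star B * B).trace = ∑ i, ∑ j, B i j ^ 2 := by
    rw [Finset.sum_comm]
    simp [trace, mul_apply, star_apply, sq]
  rw [h1, h2, Finset.sum_mul]
  refine Finset.sum_le_sum fun i _ => ?_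
  simpa [dotProduct, ← sq] using Finset.sum_mul_sq_le_sq_mul_sq Finset.univ (B i) x

lemma quad_nonneg {m : ℕ} {P : Matrix (Fin m) (Fin m) ℝ} (hP : P.PosSemidef)
    (x : Fin m → ℝ) : 0 ≤ x ⬝ᵥ P *ᵥ x := by
  simpa using hP.dotProduct_mulVec_nonneg x

lemma quad_add_le {m : ℕ} {P : Matrix (Fin m) (Fin m) ℝ} (hP : P.PosSemidef)
    (x y : Fin m → ℝ) :
    (x + y) ⬝ᵥ P *ᵥ (x + y) ≤ 2 * (x ⬝ᵥ P *ᵥ x) + 2 * (y ⬝ᵥ P *ᵥ y) := by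
  have := quad_nonneg hP (x - y)
  simp only [mulVec_sub, mulVec_add, dotProduct_sub, sub_dotProduct, add_dotProduct,
    dotProduct_add] at this ⊢
  linarith

lemma quad_congr {m k : ℕ} (F : Matrix (Fin m) (Fin k) ℝ) (P : Matrix (Fin k) (Fin k) ℝ)
    (u : Fin m → ℝ) : u ⬝ᵥ (F * P * Fᵀ) *ᵥ u = (u ᵥ* F) ⬝ᵥ P *ᵥ (u ᵥ* F) := by
  rw [← mulVec_mulVec, ← mulVec_mulVec, dotProduct_mulVec, mulVec_transpose]

/-- A subspace of row vectors containing the row space of `C` and stable under right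
multiplication by `A` is everything when `(A, C)` is observable. -/
lemma eq_top_of_observable {n p : ℕ} {A : Matrix (Fin n) (Fin n) ℝ}
    {C : Matrix (Fin p) (Fin n) ℝ}
    (hobs : ∀ v : Fin n → ℝ, (∀ k : ℕ, (C * A ^ k).mulVec v = 0) → v = 0)
    (W : Submodule ℝ (Fin n → ℝ)) (hC : ∀ y, y ᵥ* C ∈ W) (hA : ∀ u ∈ W, u ᵥ* A ∈ W) :
    W = ⊤ := by
  by_contra hW
  obtain ⟨f, hf0, hf⟩ := W.exists_le_ker_of_lt_top (lt_top_iff_ne_top.2 hW)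
  have hfv : ∀ x, f x = x ⬝ᵥ (fun i => f (fun j => if i = j then 1 else 0)) := fun x => by
    rw [LinearMap.pi_apply_eq_sum_univ f x]; simp [dotProduct]
  set v : Fin n → ℝ := fun i => f (fun j => if i = j then 1 else 0)
  have hk : ∀ (k : ℕ) y, y ᵥ* (C * A ^ k) ∈ W := by
    intro k
    induction k with
    | zero => simpa using hC
    | succ k ih =>
      intro y
      rw [pow_succ, ← Matrix.mul_assoc, ← vecMul_vecMul]
      exact hA _ (ih y)
  have hv : v = 0 := hobs v fun k => by
    refine dotProduct_eq_zero _ fun y => ?_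
    rw [dotProduct_comm, dotProduct_mulVec, ← hfv]
    exact hf (hk k y)
  exact hf0 (LinearMap.ext fun x => by rw [hfv, hv]; simp)

/-- If `a + i b` is a left eigenvector of `F` for `μ`, then summing the Lyapunov inequality over
`a` and `b` cancels the cross terms and yields
`q (|a|² + |b|²) ≤ (1 - |μ|²) (aᵀ P a + bᵀ P b)`, while `tr P ≤ K` bounds the right-hand form. -/
lemma eigenvalue_bound {n : ℕ} {F P : Matrix (Fin n) (Fin n) ℝ} (hP : P.PosSemidef)
    {q K : ℝ} (hq : 0 < q) (hK : P.trace ≤ K)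
    (h : ∀ u : Fin n → ℝ, (u ᵥ* F) ⬝ᵥ P *ᵥ (u ᵥ* F) + q * (u ⬝ᵥ u) ≤ u ⬝ᵥ P *ᵥ u)
    {μ : ℂ} (hμ : μ ∈ spectrum ℂ (F.map (fun x => (x : ℂ)))) :
    q ≤ K * (1 - ‖μ‖ ^ 2) := by
  rw [spectrum.mem_iff, isUnit_iff_isUnit_det, isUnit_iff_ne_zero, not_not,
    ← exists_vecMul_eq_zero_iff] at hμ
  obtain ⟨w, hw0, hw⟩ := hμ
  rw [vecMul_sub, sub_eq_zero, algebraMap_eq_diagonal] at hw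
  have hi : ∀ i, w i * μ = ∑ j, w j * (F j i : ℂ) := fun i => by
    have := congrFun hw i
    simpa [vecMul, dotProduct, diagonal_apply] using this
  set a : Fin n → ℝ := fun i => (w i).re
  set b : Fin n → ℝ := fun i => (w i).im
  have hFa : a ᵥ* F = μ.re • a - μ.im • b := by
    ext i
    have := congrArg Complex.re (hi i)
    simp [vecMul, dotProduct, a, b] at this ⊢
    linarith
  have hFb : b ᵥ* F = μ.im • a + μ.re • b := by
    ext i
    have := congrArg Complex.im (hi i)
    simp [vecMul, dotProduct, a, b] at this ⊢
    linarith
  have h1 := h a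
  have h2 := h b
  rw [hFa] at h1
  rw [hFb] at h2
  have h3 := quad_le_trace hP a
  have h4 := quad_le_trace hP b
  have hN : 0 < a ⬝ᵥ a + b ⬝ᵥ b := by
    have hab : a ≠ 0 ∨ b ≠ 0 := by
      by_contra! hc
      exact hw0 (funext fun i => Complex.ext (congrFun hc.1 i) (congrFun hc.2 i))
    have h5 : ∀ x : Fin n → ℝ, 0 ≤ x ⬝ᵥ x := fun x => by
      simpa using dotProduct_star_self_nonneg x
    have h6 : ∀ x : Fin n → ℝ, x ≠ 0 → 0 < x ⬝ᵥ x := fun x hx => by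
      simpa using dotProduct_star_self_pos_iff.2 hx
    rcases hab with hx | hx
    · linarith [h6 a hx, h5 b]
    · linarith [h6 b hx, h5 a]
  have hsq : ‖μ‖ ^ 2 = μ.re ^ 2 + μ.im ^ 2 := by
    rw [← Complex.normSq_eq_norm_sq, Complex.normSq_apply]; ring
  simp only [mulVec_sub, mulVec_add, mulVec_smul, dotProduct_sub, sub_dotProduct,
    add_dotProduct, dotProduct_add, smul_dotProduct, dotProduct_smul, smul_eq_mul] at h1 h2
  have h7 : q * (a ⬝ᵥ a + b ⬝ᵥ b) ≤ (1 - ‖μ‖ ^ 2) * (a ⬝ᵥ P *ᵥ a + b ⬝ᵥ P *ᵥ b) := by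
    rw [hsq]; nlinarith
  have h8 : a ⬝ᵥ P *ᵥ a + b ⬝ᵥ P *ᵥ b ≤ K * (a ⬝ᵥ a + b ⬝ᵥ b) := by nlinarith
  have h9 : 0 ≤ a ⬝ᵥ P *ᵥ a + b ⬝ᵥ P *ᵥ b := add_nonneg (quad_nonneg hP a) (quad_nonneg hP b)
  have h10 : 0 ≤ 1 - ‖μ‖ ^ 2 := by
    by_contra hc
    nlinarith [mul_pos hq hN]
  refine le_of_mul_le_mul_right ?_ hN
  nlinarith

/-- Uniformly over the indices with `Tr(C P_j Cᵀ) ≤ B`, the trace of `P_j` is bounded. -/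
lemma trace_bound {n p : ℕ} {A : Matrix (Fin n) (Fin n) ℝ} {C : Matrix (Fin p) (Fin n) ℝ}
    (hobs : ∀ v : Fin n → ℝ, (∀ k : ℕ, (C * A ^ k).mulVec v = 0) → v = 0)
    {L : ℕ → Matrix (Fin n) (Fin p) ℝ} {P : ℕ → Matrix (Fin n) (Fin n) ℝ}
    (hP : ∀ j, (P j).PosSemidef) {r : ℝ} (hr : 0 < r)
    (h : ∀ j (u : Fin n → ℝ), (u ᵥ* (A - L j * C)) ⬝ᵥ P j *ᵥ (u ᵥ* (A - L j * C))
      + r * ((u ᵥ* L j) ⬝ᵥ (u ᵥ* L j)) ≤ u ⬝ᵥ P j *ᵥ u) (B : ℝ) :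
    ∃ K : ℝ, ∀ j, (C * P j * Cᵀ).trace ≤ B → (P j).trace ≤ K := by
  have hnn : ∀ {m : ℕ} (x : Fin m → ℝ), 0 ≤ x ⬝ᵥ x := fun x => by
    simpa using dotProduct_star_self_nonneg x
  have hCy : ∀ j, (C * P j * Cᵀ).trace ≤ B → ∀ y : Fin p → ℝ,
      (y ᵥ* C) ⬝ᵥ P j *ᵥ (y ᵥ* C) ≤ B * (y ⬝ᵥ y) := by
    intro j hj y
    have hpsd : (C * P j * Cᵀ).PosSemidef := by
      simpa using (hP j).mul_mul_conjTranspose_same C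
    rw [← quad_congr]
    exact (quad_le_trace hpsd y).trans (mul_le_mul_of_nonneg_right hj (hnn y))
  let W : Submodule ℝ (Fin n → ℝ) :=
    { carrier := {u | ∃ K : ℝ, ∀ j, (C * P j * Cᵀ).trace ≤ B → u ⬝ᵥ P j *ᵥ u ≤ K}
      zero_mem' := ⟨0, fun j _ => by simp⟩
      add_mem' := by
        rintro u v ⟨K, hK⟩ ⟨K', hK'⟩
        refine ⟨2 * K + 2 * K', fun j hj => ?_⟩
        linarith [quad_add_le (hP j) u v, hK j hj, hK' j hj]
      smul_mem' := by
        rintro c u ⟨K, hK⟩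
        refine ⟨c ^ 2 * K, fun j hj => ?_⟩
        simp only [mulVec_smul, dotProduct_smul, smul_dotProduct, smul_eq_mul]
        nlinarith [mul_le_mul_of_nonneg_left (hK j hj) (sq_nonneg c)] }
  have hW : W = ⊤ := by
    refine eq_top_of_observable hobs W (fun y => ⟨B * (y ⬝ᵥ y), fun j hj => hCy j hj y⟩) ?_
    rintro u ⟨K, hK⟩
    refine ⟨2 * K + 2 * (|B| * (K / r)), fun j hj => ?_⟩
    have hdec : u ᵥ* A = u ᵥ* (A - L j * C) + (u ᵥ* L j) ᵥ* C := by
      rw [vecMul_vecMul, ← vecMul_add, sub_add_cancel]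
    have h1 := h j u
    have h2 := hK j hj
    have h3 := hCy j hj (u ᵥ* L j)
    have h4 := quad_nonneg (hP j) (u ᵥ* (A - L j * C))
    have h5 : (u ᵥ* L j) ⬝ᵥ (u ᵥ* L j) ≤ K / r := by
      rw [le_div_iff₀ hr]
      linarith
    have h6 := mul_le_mul_of_nonneg_right (le_abs_self B) (hnn (u ᵥ* L j))
    have h7 := mul_le_mul_of_nonneg_left h5 (abs_nonneg B)
    have h8 := mul_nonneg hr.le (hnn (u ᵥ* L j))
    have h9 := quad_add_le (hP j) (u ᵥ* (A - L j * C)) ((u ᵥ* L j) ᵥ* C)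
    rw [hdec]
    linarith
  have hall : ∀ i, ∃ K : ℝ, ∀ j, (C * P j * Cᵀ).trace ≤ B → P j i i ≤ K := by
    intro i
    have : Pi.single i 1 ∈ W := hW ▸ Submodule.mem_top
    obtain ⟨K, hK⟩ := this
    exact ⟨K, fun j hj => by simpa using hK j hj⟩
  choose K hK using hall
  exact ⟨∑ i, K i, fun j hj => Finset.sum_le_sum fun i _ => hK i j hj⟩

/-- **Coercivity of the one-step-ahead prediction loss (Expanded Coercivity Lemma, part 1).**
Assume `(A, C)` is observable.  Let `L j` be gains for which every complex eigenvalue of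
`A − L_j C` has modulus `< 1`, and let `P j` be symmetric PSD solutions of
`P_j = (A − L_j C) P_j (A − L_j C)ᵀ + Q_w + L_j R_v L_jᵀ`.  If `‖L_j‖_F → ∞` or the
spectral radius of `A − L_j C` tends to `1`, then
`J_pred(L_j) = Tr(C P_j Cᵀ) + Tr(R_v) → ∞`. -/
theorem coercivity_prediction_loss {n p : ℕ}
    (A : Matrix (Fin n) (Fin n) ℝ) (C : Matrix (Fin p) (Fin n) ℝ)
    (Qw : Matrix (Fin n) (Fin n) ℝ) (hQw : Qw.PosDef)
    (Rv : Matrix (Fin p) (Fin p) ℝ) (hRv : Rv.PosDef)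
    (hobs : ∀ v : Fin n → ℝ, (∀ k : ℕ, (C * A ^ k).mulVec v = 0) → v = 0)
    (L : ℕ → Matrix (Fin n) (Fin p) ℝ)
    (P : ℕ → Matrix (Fin n) (Fin n) ℝ)
    (hstab : ∀ j, ∀ μ ∈ spectrum ℂ ((A - L j * C).map (fun x => (x : ℂ))), ‖μ‖ < 1)
    (hP : ∀ j, (P j).PosSemidef)
    (hlyap : ∀ j, P j = (A - L j * C) * P j * (A - L j * C)ᵀ
                        + Qw + L j * Rv * (L j)ᵀ)
    (hblow : Tendsto (fun j => frobNorm (L j)) atTop atTop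
      ∨ Tendsto (fun j => spectralRadius ℂ ((A - L j * C).map (fun x => (x : ℂ))))
          atTop (nhds 1)) :
    Tendsto (fun j => (C * P j * Cᵀ).trace + Rv.trace) atTop atTop := by
  obtain ⟨q, hq, hQ⟩ := posDef_lower hQw
  obtain ⟨r, hr, hR⟩ := posDef_lower hRv
  have hnn : ∀ {m : ℕ} (x : Fin m → ℝ), 0 ≤ x ⬝ᵥ x := fun x => by
    simpa using dotProduct_star_self_nonneg x
  have key : ∀ j (u : Fin n → ℝ), (u ᵥ* (A - L j * C)) ⬝ᵥ P j *ᵥ (u ᵥ* (A - L j * C))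
      + q * (u ⬝ᵥ u) + r * ((u ᵥ* L j) ⬝ᵥ (u ᵥ* L j)) ≤ u ⬝ᵥ P j *ᵥ u := by
    intro j u
    have h1 : u ⬝ᵥ P j *ᵥ u = (u ᵥ* (A - L j * C)) ⬝ᵥ P j *ᵥ (u ᵥ* (A - L j * C))
        + u ⬝ᵥ Qw *ᵥ u + (u ᵥ* L j) ⬝ᵥ Rv *ᵥ (u ᵥ* L j) := by
      conv_lhs => rw [hlyap j]
      rw [add_mulVec, add_mulVec, dotProduct_add, dotProduct_add, quad_congr, quad_congr]
    linarith [hQ u, hR (u ᵥ* L j)]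
  refine tendsto_atTop_add_const_right _ _ (tendsto_atTop.2 fun B => ?_)
  obtain ⟨K, hK⟩ := trace_bound hobs hP hr
    (fun j u => by linarith [key j u, mul_nonneg hq.le (hnn u)]) B
  rcases hblow with hL | hρ
  · filter_upwards [hL.eventually_gt_atTop √(K / r)] with j hj
    by_contra! hB
    have htr := hK j hB.le
    refine absurd hj (not_lt.2 (Real.sqrt_le_sqrt ?_))
    rw [le_div_iff₀ hr, Finset.sum_mul]
    refine le_trans (Finset.sum_le_sum fun i _ => ?_) htr
    have h1 := key j (Pi.single i 1)
    have h2 := quad_nonneg (hP j) (Pi.single i 1 ᵥ* (A - L j * C))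
    have h3 := mul_nonneg hq.le (hnn (Pi.single i (1 : ℝ) : Fin n → ℝ))
    have h4 : (Pi.single i 1 ᵥ* L j) ⬝ᵥ (Pi.single i 1 ᵥ* L j) = ∑ k, L j i k ^ 2 := by
      simp [dotProduct, sq]
    have h5 : (Pi.single i 1 : Fin n → ℝ) ⬝ᵥ P j *ᵥ Pi.single i 1 = P j i i := by simp
    rw [h4, h5] at h1
    rw [diag_apply]
    linarith
  · have hK1 : 0 < max K 1 := lt_max_of_lt_right one_pos
    -- `K` may be nonpositive, so the spectral gap is expressed through `max K 1`.
    have hlt : ENNReal.ofReal √(1 - q / max K 1) < 1 := by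
      rw [ENNReal.ofReal_lt_one, Real.sqrt_lt' one_pos]
      have := div_pos hq hK1
      linarith
    filter_upwards [hρ.eventually (lt_mem_nhds hlt)] with j hj
    by_contra! hB
    refine absurd hj (not_lt.2 (iSup₂_le fun μ hμ => ?_))
    have h1 := eigenvalue_bound (hP j) hq ((hK j hB.le).trans (le_max_left K 1))
      (fun u => by linarith [key j u, mul_nonneg hr.le (hnn (u ᵥ* L j))]) hμ
    change ‖μ‖ₑ ≤ _
    rw [← ofReal_norm]
    refine ENNReal.ofReal_le_ofReal (Real.le_sqrt_of_sq_le ?_)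
    have h2 : q / max K 1 ≤ 1 - ‖μ‖ ^ 2 := by
      rw [div_le_iff₀ hK1]
      linarith
    linarith
end

section
/- Convergence of the gradient flow to the Kalman gain (Theorem 2, convergence part). Assume the pair (A, C A) is observable. Suppose L_KF ∈ 𝒮 satisfies K(L_KF) = 0 and is the unique stabilizing gain with this property. Let L : [0, ∞) → ℝ^{n×p} be continuously differentiable with L(t) ∈ 𝒮 for all t ≥ 0, satisfying the gradient-flow equation L'(t) = 2 W_o(L(t)) K(L(t)) for all t ≥ 0. Then L(t) converges to L_KF as t → ∞. -/
/-!
The loss is a strict Lyapunov function with compact sublevel sets, and its only stationary point is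
the Kalman gain.

*Dissipation.* In dual form the loss is, up to a constant, `Tr(W_o(L) Q_η(L))`. Subtracting the
Lyapunov equations of two stabilizing gains gives an exact quadratic expansion of the loss
(`cost_sub`), whence its derivative along the flow is `-‖L'(t)‖²` in the Frobenius norm
(`hasDerivAt_cost`).

*Compactness.* Write the Gramian as `W = Bᵀ B`. As `Q_w` and `R_v` are positive definite, a bound on
the loss bounds `B (1 - L C)` and `B L`, hence `B`. In the seminorm `X ↦ ‖B X‖` the matrices `F(L)`
and `C A` are contractions, so `A = F(L) + L C A` is bounded in terms of `‖B L‖` alone; observability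
of `(A, C A)` then bounds the norm by the seminorm and so bounds `L` (`norm_le_of_gramian`).
Limits remain stabilizing because a positive semidefinite solution of the Lyapunov equation,
together with observability, already forces stability (`mem_stabSet_of_gramian`). Thus sublevel
sets are compact (`isCompact_sublevel`).

*Convergence.* The Gramian is injective by observability, so `W_o(L) K(L) = 0` only if `K(L) = 0`,
that is, only at `L_KF`. On the compact sublevel set the speed is bounded, and it is bounded away from
zero off any neighbourhood of `L_KF`. Infinitely many visits far from `L_KF` would each consume a
fixed amount of the loss, which is nonnegative (`tendsto_of_dissipation`).
-/

open Matrix Filter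

attribute [local instance] Matrix.frobeniusNormedAddCommGroup Matrix.frobeniusNormedSpace

noncomputable section

/-- `F(L) = (I − L C) A`. -/
def Fcl {n p : ℕ} (A : Matrix (Fin n) (Fin n) ℝ) (C : Matrix (Fin p) (Fin n) ℝ)
    (L : Matrix (Fin n) (Fin p) ℝ) : Matrix (Fin n) (Fin n) ℝ :=
  (1 - L * C) * A

/-- `Q_η(L) = (I − L C) Q_w (I − L C)ᵀ + L R_v Lᵀ`. -/
def Qeta {n p : ℕ} (C : Matrix (Fin p) (Fin n) ℝ)
    (Qw : Matrix (Fin n) (Fin n) ℝ) (Rv : Matrix (Fin p) (Fin p) ℝ)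
    (L : Matrix (Fin n) (Fin p) ℝ) : Matrix (Fin n) (Fin n) ℝ :=
  (1 - L * C) * Qw * (1 - L * C)ᵀ + L * Rv * Lᵀ

/-- The set `𝒮` of stabilizing gains: every complex eigenvalue of `F(L)` has modulus `< 1`. -/
def stabSet {n p : ℕ} (A : Matrix (Fin n) (Fin n) ℝ) (C : Matrix (Fin p) (Fin n) ℝ) :
    Set (Matrix (Fin n) (Fin p) ℝ) :=
  {L | ∀ μ ∈ spectrum ℂ ((Fcl A C L).map (fun x => (x : ℂ))), ‖μ‖ < 1}

/-- `P(L) = ∑_{k≥0} F(L)^k Q_η(L) (F(L)ᵀ)^k`. -/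
def Pmat {n p : ℕ} (A : Matrix (Fin n) (Fin n) ℝ) (C : Matrix (Fin p) (Fin n) ℝ)
    (Qw : Matrix (Fin n) (Fin n) ℝ) (Rv : Matrix (Fin p) (Fin p) ℝ)
    (L : Matrix (Fin n) (Fin p) ℝ) : Matrix (Fin n) (Fin n) ℝ :=
  ∑' k : ℕ, (Fcl A C L) ^ k * Qeta C Qw Rv L * ((Fcl A C L)ᵀ) ^ k

/-- Observability Gramian `W_o(L) = ∑_{k≥0} (F(L)ᵀ)^k Aᵀ Cᵀ C A F(L)^k`. -/
def Wo {n p : ℕ} (A : Matrix (Fin n) (Fin n) ℝ) (C : Matrix (Fin p) (Fin n) ℝ)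
    (L : Matrix (Fin n) (Fin p) ℝ) : Matrix (Fin n) (Fin n) ℝ :=
  ∑' k : ℕ, ((Fcl A C L)ᵀ) ^ k * (Aᵀ * Cᵀ * C * A) * (Fcl A C L) ^ k

/-- Cross-covariance `K(L) = F(L) P(L) Aᵀ Cᵀ + (I − L C) Q_w Cᵀ − L R_v`. -/
def Kmat {n p : ℕ} (A : Matrix (Fin n) (Fin n) ℝ) (C : Matrix (Fin p) (Fin n) ℝ)
    (Qw : Matrix (Fin n) (Fin n) ℝ) (Rv : Matrix (Fin p) (Fin p) ℝ)
    (L : Matrix (Fin n) (Fin p) ℝ) : Matrix (Fin n) (Fin p) ℝ :=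
  Fcl A C L * Pmat A C Qw Rv L * Aᵀ * Cᵀ + (1 - L * C) * Qw * Cᵀ - L * Rv

/-! ### Powers of a stable matrix and Lyapunov series -/

open scoped MatrixOrder in
theorem exists_factor_of_posSemidef {n : ℕ} {W : Matrix (Fin n) (Fin n) ℝ} (hW : W.PosSemidef) :
    ∃ B : Matrix (Fin n) (Fin n) ℝ, W = Bᵀ * B := by
  obtain ⟨B, hB⟩ := CStarAlgebra.nonneg_iff_eq_star_mul_self.mp hW.nonneg
  refine ⟨B, ?_⟩
  rw [hB, Matrix.star_eq_conjTranspose, Matrix.conjTranspose_eq_transpose_of_trivial]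

section
attribute [local instance] Matrix.frobeniusNormedRing Matrix.frobeniusNormedAlgebra

/-- Gelfand's formula for the complexification of `F`, read back on the real matrix `F`; the
Frobenius norm does not change under complexification. -/
theorem pow_norm_eventually_le {n : ℕ} (F : Matrix (Fin n) (Fin n) ℝ)
    (hF : ∀ μ ∈ spectrum ℂ (F.map (fun x => (x : ℂ))), ‖μ‖ < 1) :
    ∃ r : ℝ, 0 ≤ r ∧ r < 1 ∧ ∀ᶠ k : ℕ in atTop, ‖F ^ k‖ ≤ r ^ k := by
  set G : Matrix (Fin n) (Fin n) ℂ := F.map (fun x => (x : ℂ)) with hG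
  have : CompleteSpace (Matrix (Fin n) (Fin n) ℂ) := FiniteDimensional.complete ℂ _
  have hrad : spectralRadius ℂ G < 1 := by
    by_cases hne : (spectrum ℂ G).Nonempty
    · have := spectrum.spectralRadius_lt_of_forall_lt_of_nonempty (r := 1) hne
        (fun k hk => by simpa [← NNReal.coe_lt_coe] using hF k hk)
      simpa using this
    · rw [Set.not_nonempty_iff_eq_empty] at hne
      simp [spectralRadius, hne]
  obtain ⟨r, hr1, hr2⟩ := ENNReal.lt_iff_exists_nnreal_btwn.1 hrad
  refine ⟨r, r.2, by exact_mod_cast hr2, ?_⟩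
  have ht := spectrum.pow_nnnorm_pow_one_div_tendsto_nhds_spectralRadius G
  filter_upwards [ht.eventually (gt_mem_nhds hr1), eventually_gt_atTop 0] with k hk hk0
  have hnorm : ‖F ^ k‖ = ‖G ^ k‖ := by
    have : G ^ k = (F ^ k).map (fun x => (x : ℂ)) := by
      rw [hG]
      exact (Matrix.map_pow F Complex.ofRealHom k).symm
    rw [this, Matrix.frobenius_norm_map_eq _ _ (fun a => Complex.norm_real a)]
  rw [hnorm]
  have hk' : (‖G ^ k‖₊ : ENNReal) ≤ (r : ENNReal) ^ k := by
    have h2 := ENNReal.rpow_le_rpow hk.le (z := (k : ℝ)) (by positivity)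
    rw [← ENNReal.rpow_mul, one_div, inv_mul_cancel₀ (by positivity), ENNReal.rpow_one,
      ENNReal.rpow_natCast] at h2
    exact h2
  exact_mod_cast hk'

/-- The powers of `F` decay geometrically: `‖F ^ k‖ ≤ r ^ k` for all large `k`, with some fixed
`r < 1`. By Gelfand's formula this follows from all complex eigenvalues having modulus `< 1`. -/
def PowStable {n : ℕ} (F : Matrix (Fin n) (Fin n) ℝ) : Prop :=
  ∃ r : ℝ, 0 ≤ r ∧ r < 1 ∧ ∀ᶠ k : ℕ in atTop, ‖F ^ k‖ ≤ r ^ k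

theorem PowStable.transpose {n : ℕ} {F : Matrix (Fin n) (Fin n) ℝ} (h : PowStable F) :
    PowStable Fᵀ := by
  obtain ⟨r, h0, h1, h⟩ := h
  refine ⟨r, h0, h1, h.mono fun k hk => ?_⟩
  rwa [← Matrix.transpose_pow, Matrix.frobenius_norm_transpose]

theorem PowStable.summable {n : ℕ} {F : Matrix (Fin n) (Fin n) ℝ} (h : PowStable F)
    (M : Matrix (Fin n) (Fin n) ℝ) : Summable fun k : ℕ => F ^ k * M * Fᵀ ^ k := by
  obtain ⟨r, h0, h1, h⟩ := h
  have : CompleteSpace (Matrix (Fin n) (Fin n) ℝ) := FiniteDimensional.complete ℝ _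
  have hs : Summable fun k : ℕ => ‖M‖ * (r * r) ^ k :=
    (summable_geometric_of_lt_one (mul_nonneg h0 h0) (by nlinarith)).mul_left _
  refine Summable.of_norm_bounded_eventually_nat hs (h.mono fun k hk => ?_)
  have hT : ‖Fᵀ ^ k‖ ≤ r ^ k := by
    rwa [← Matrix.transpose_pow, Matrix.frobenius_norm_transpose]
  calc ‖F ^ k * M * Fᵀ ^ k‖ ≤ ‖F ^ k‖ * ‖M‖ * ‖Fᵀ ^ k‖ :=
        (norm_mul_le _ _).trans (by gcongr; exact norm_mul_le _ _)
    _ ≤ r ^ k * ‖M‖ * r ^ k := by gcongr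
    _ = ‖M‖ * (r * r) ^ k := by rw [mul_pow]; ring

/-- The Lyapunov series solves the Lyapunov (Stein) equation `X = F X Fᵀ + M`. -/
theorem PowStable.tsum_eq {n : ℕ} {F : Matrix (Fin n) (Fin n) ℝ} (h : PowStable F)
    (M : Matrix (Fin n) (Fin n) ℝ) :
    ∑' k : ℕ, F ^ k * M * Fᵀ ^ k = F * (∑' k : ℕ, F ^ k * M * Fᵀ ^ k) * Fᵀ + M := by
  have hs := h.summable M
  conv_lhs => rw [hs.tsum_eq_zero_add]
  rw [← hs.tsum_mul_left, ← (hs.mul_left F).tsum_mul_right, add_comm]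
  congr 1
  · refine tsum_congr fun k => ?_
    rw [pow_succ', pow_succ]
    noncomm_ring
  · simp

theorem PowStable.fixed_eq_zero {n : ℕ} {F : Matrix (Fin n) (Fin n) ℝ} (h : PowStable F)
    {X : Matrix (Fin n) (Fin n) ℝ} (hX : X = F * X * Fᵀ) : X = 0 := by
  have hk : ∀ k : ℕ, F ^ k * X * Fᵀ ^ k = X := by
    intro k
    induction k with
    | zero => simp
    | succ k ih =>
      calc F ^ (k + 1) * X * Fᵀ ^ (k + 1) = F ^ k * (F * X * Fᵀ) * Fᵀ ^ k := by
            rw [pow_succ, pow_succ']; noncomm_ring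
        _ = X := by rw [← hX, ih]
  have ht := (h.summable X).tendsto_atTop_zero
  simp only [hk] at ht
  exact tendsto_nhds_unique tendsto_const_nhds ht

/-- The Lyapunov equation has no other solution than the Lyapunov series. -/
theorem PowStable.unique {n : ℕ} {F : Matrix (Fin n) (Fin n) ℝ} (h : PowStable F)
    {X M : Matrix (Fin n) (Fin n) ℝ} (hX : X = F * X * Fᵀ + M) :
    X = ∑' k : ℕ, F ^ k * M * Fᵀ ^ k := by
  refine sub_eq_zero.1 (h.fixed_eq_zero ?_)
  have h2 := h.tsum_eq M
  generalize (∑' k : ℕ, F ^ k * M * Fᵀ ^ k) = Y at h2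
  calc X - Y = (F * X * Fᵀ + M) - (F * Y * Fᵀ + M) := by rw [← hX, ← h2]
    _ = F * (X - Y) * Fᵀ := by noncomm_ring

/-- A solution of `X = F X G + M` depends continuously on the data as long as the homogeneous
equation has only the zero solution: `X = T⁻¹ M` with `T Y = Y - F Y G`, which is invertible in
finite dimension, and operator inversion is continuous at invertible operators. -/
theorem continuousOn_of_stein {V : Type*} [NormedRing V] [NormedAlgebra ℝ V]
    [FiniteDimensional ℝ V] {α : Type*} [TopologicalSpace α] {s : Set α} {F G M X : α → V}
    (hF : ContinuousOn F s) (hG : ContinuousOn G s) (hM : ContinuousOn M s)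
    (huniq : ∀ a ∈ s, ∀ Y : V, Y = F a * Y * G a → Y = 0)
    (hX : ∀ a ∈ s, X a = F a * X a * G a + M a) : ContinuousOn X s := by
  have : CompleteSpace V := FiniteDimensional.complete ℝ _
  let T : α → V →L[ℝ] V := fun a => 1 - ContinuousLinearMap.mulLeftRight ℝ V (F a) (G a)
  have hTapp : ∀ a Y, T a Y = Y - F a * Y * G a := fun a Y => by
    simp [T]
  have hTc : ContinuousOn T s := by
    refine ContinuousOn.sub continuousOn_const ?_
    exact ((ContinuousLinearMap.mulLeftRight ℝ V).continuous.comp_continuousOn hF).clm_apply hG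
  have hunit : ∀ a ∈ s, IsUnit (T a) := by
    intro a ha
    have hinj : Function.Injective (T a) := by
      rw [injective_iff_map_eq_zero]
      intro Y hY
      rw [hTapp, sub_eq_zero] at hY
      exact huniq a ha Y hY
    rw [ContinuousLinearMap.isUnit_iff_bijective]
    exact ⟨hinj, (LinearMap.injective_iff_surjective (f := (T a : V →ₗ[ℝ] V))).1 hinj⟩
  have hinv : ContinuousOn (fun a => Ring.inverse (T a)) s := by
    intro a ha
    obtain ⟨u, hu⟩ := hunit a ha
    have hc := NormedRing.inverse_continuousAt u
    rw [hu] at hc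
    exact hc.comp_continuousWithinAt (hTc a ha)
  refine (hinv.clm_apply hM).congr fun a ha => ?_
  have h2 : M a = T a (X a) := by
    rw [hTapp]
    exact eq_sub_of_add_eq' (hX a ha).symm
  have h3 : Ring.inverse (T a) * T a = 1 := Ring.inverse_mul_cancel _ (hunit a ha)
  change X a = Ring.inverse (T a) (M a)
  rw [h2]
  exact (DFunLike.congr_fun h3 _).symm

theorem continuousOn_lyapunov {n : ℕ} {α : Type*} [TopologicalSpace α] {s : Set α}
    {F M : α → Matrix (Fin n) (Fin n) ℝ} (hF : ContinuousOn F s) (hM : ContinuousOn M s)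
    (hst : ∀ a ∈ s, PowStable (F a)) :
    ContinuousOn (fun a => ∑' k : ℕ, F a ^ k * M a * (F a)ᵀ ^ k) s := by
  have hFT : ContinuousOn (fun a => (F a)ᵀ) s :=
    (continuous_id.matrix_transpose).comp_continuousOn hF
  exact continuousOn_of_stein hF hFT hM (fun a ha Y hY => (hst a ha).fixed_eq_zero hY)
    (fun a ha => (hst a ha).tsum_eq (M a))

/-! ### Frobenius norm, factorizations and observability -/

theorem ofReal_sq_frobenius {𝕜 m l : Type*} [RCLike 𝕜] [Fintype m] [Fintype l]
    (X : Matrix m l 𝕜) : ((‖X‖ ^ 2 : ℝ) : 𝕜) = (Xᴴ * X).trace := by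
  have h : ‖X‖ ^ 2 = ∑ i, ∑ j, ‖X i j‖ ^ 2 := by
    rw [Matrix.frobenius_norm_def, ← Real.sqrt_eq_rpow, Real.sq_sqrt (by positivity)]
    simp
  rw [h, Finset.sum_comm]
  simp only [Matrix.trace, Matrix.diag, Matrix.mul_apply, Matrix.conjTranspose_apply]
  push_cast
  refine Finset.sum_congr rfl fun i _ => Finset.sum_congr rfl fun j _ => ?_
  exact (RCLike.conj_mul _).symm

theorem sq_frobenius {m l : Type*} [Fintype m] [Fintype l]
    (X : Matrix m l ℝ) : ‖X‖ ^ 2 = (Xᵀ * X).trace := by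
  have h := ofReal_sq_frobenius X
  rwa [Matrix.conjTranspose_eq_transpose_of_trivial] at h

/-- If `W = Bᴴ B` solves `W = Fᴴ W F + Hᴴ H`, then in the seminorm `X ↦ ‖B X‖` the map `F` loses
exactly the output energy `‖H X‖²`. Used over `ℝ` for bounds and over `ℂ` for eigenvectors. -/
theorem energy_balance {𝕜 : Type*} [RCLike 𝕜] {n p : ℕ} {l : Type*} [Fintype l]
    {B F : Matrix (Fin n) (Fin n) 𝕜} {H : Matrix (Fin p) (Fin n) 𝕜}
    (h : Bᴴ * B = Fᴴ * (Bᴴ * B) * F + Hᴴ * H) (X : Matrix (Fin n) l 𝕜) :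
    ‖B * X‖ ^ 2 = ‖B * (F * X)‖ ^ 2 + ‖H * X‖ ^ 2 := by
  have h1 : ((‖B * X‖ ^ 2 : ℝ) : 𝕜)
      = ((‖B * (F * X)‖ ^ 2 : ℝ) : 𝕜) + ((‖H * X‖ ^ 2 : ℝ) : 𝕜) := by
    rw [ofReal_sq_frobenius, ofReal_sq_frobenius, ofReal_sq_frobenius, ← Matrix.trace_add]
    congr 1
    calc (B * X)ᴴ * (B * X) = Xᴴ * (Bᴴ * B) * X := by
          simp only [Matrix.conjTranspose_mul, Matrix.mul_assoc]
      _ = _ := by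
          rw [h]
          simp only [Matrix.conjTranspose_mul, Matrix.mul_assoc, Matrix.mul_add, Matrix.add_mul]
  exact_mod_cast h1

/-- Observability gives a linear reconstruction of the state from finitely many outputs. The left
inverse is built from the finite-horizon Gramian `∑ (H Aᵏ)ᵀ (H Aᵏ)`. -/
theorem exists_observability_inverse {n p : ℕ}
    (A : Matrix (Fin n) (Fin n) ℝ) (H : Matrix (Fin p) (Fin n) ℝ)
    (hobs : ∀ v : Fin n → ℝ, (∀ k : ℕ, (H * A ^ k).mulVec v = 0) → v = 0) :
    ∃ (N : ℕ) (M : ℕ → Matrix (Fin n) (Fin p) ℝ),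
      ∑ k ∈ Finset.range N, M k * (H * A ^ k) = 1 := by
  let f : ℕ →o (Submodule ℝ (Fin n → ℝ))ᵒᵈ :=
    { toFun := fun N => OrderDual.toDual (⨅ k : Fin N, LinearMap.ker (H * A ^ (k : ℕ)).mulVecLin)
      monotone' := fun a b hab => by
        change (⨅ k : Fin b, LinearMap.ker (H * A ^ (k : ℕ)).mulVecLin) ≤
          ⨅ k : Fin a, LinearMap.ker (H * A ^ (k : ℕ)).mulVecLin
        exact le_iInf fun k => iInf_le_of_le (Fin.castLE hab k) le_rfl }
  obtain ⟨N, hN⟩ := IsArtinian.monotone_stabilizes f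
  -- The decreasing unobservable subspaces over horizons `0, 1, …` stabilize at `N`.
  have hker : ∀ v : Fin n → ℝ, (∀ k < N, (H * A ^ k).mulVec v = 0) → v = 0 := by
    intro v hv
    refine hobs v fun k => ?_
    have hvN : v ∈ OrderDual.ofDual (f N) := by
      change v ∈ ⨅ k : Fin N, LinearMap.ker (H * A ^ (k : ℕ)).mulVecLin
      simp only [Submodule.mem_iInf, LinearMap.mem_ker, Matrix.mulVecLin_apply]
      exact fun k => hv k k.2
    rw [hN (max N (k + 1)) (le_max_left _ _)] at hvN
    change v ∈ ⨅ k : Fin (max N (k + 1)), LinearMap.ker (H * A ^ (k : ℕ)).mulVecLin at hvN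
    simp only [Submodule.mem_iInf, LinearMap.mem_ker, Matrix.mulVecLin_apply] at hvN
    exact hvN ⟨k, lt_of_lt_of_le (Nat.lt_succ_self k) (le_max_right _ _)⟩
  let G : Matrix (Fin n) (Fin n) ℝ := ∑ k ∈ Finset.range N, (H * A ^ k)ᵀ * (H * A ^ k)
  have hdet : IsUnit G.det := by
    rw [isUnit_iff_ne_zero]
    intro h0
    obtain ⟨v, hv0, hv⟩ := Matrix.exists_mulVec_eq_zero_iff.2 h0
    refine hv0 (hker v fun k hk => ?_)
    have hsum : ∑ k ∈ Finset.range N,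
        ((H * A ^ k).mulVec v) ⬝ᵥ ((H * A ^ k).mulVec v) = 0 := by
      have h1 : v ⬝ᵥ G.mulVec v = 0 := by rw [hv]; simp
      rw [← h1]
      simp only [G, Matrix.sum_mulVec, dotProduct_sum]
      refine Finset.sum_congr rfl fun k _ => ?_
      generalize H * A ^ k = Y
      rw [← Matrix.mulVec_mulVec, Matrix.dotProduct_mulVec v, Matrix.vecMul_transpose]
    have h2 := (Finset.sum_eq_zero_iff_of_nonneg
      (fun k _ => Finset.sum_nonneg fun i _ => mul_self_nonneg _)).1 hsum k (Finset.mem_range.2 hk)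
    exact dotProduct_self_eq_zero.1 h2
  refine ⟨N, fun k => G⁻¹ * (H * A ^ k)ᵀ, ?_⟩
  simp only [Matrix.mul_assoc G⁻¹]
  rw [← Finset.mul_sum]
  exact Matrix.nonsing_inv_mul G hdet

theorem exists_factor_of_posDef {n : ℕ} {Q : Matrix (Fin n) (Fin n) ℝ} (hQ : Q.PosDef) :
    ∃ T T' : Matrix (Fin n) (Fin n) ℝ, Q = T * Tᵀ ∧ T * T' = 1 := by
  obtain ⟨B, hB⟩ := exists_factor_of_posSemidef hQ.posSemidef
  refine ⟨Bᵀ, B * Q⁻¹, by simpa using hB, ?_⟩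
  rw [← Matrix.mul_assoc, ← hB]
  exact Matrix.mul_nonsing_inv Q ((Matrix.isUnit_iff_isUnit_det Q).1 hQ.isUnit)

theorem isClosed_posSemidef {n : ℕ} :
    IsClosed {W : Matrix (Fin n) (Fin n) ℝ | W.PosSemidef} := by
  simp only [Matrix.posSemidef_iff_dotProduct_mulVec, Matrix.IsHermitian, Set.ofPred_and,
    Set.ofPred_forall]
  refine (isClosed_eq (by fun_prop) (by fun_prop)).inter (isClosed_iInter fun x => ?_)
  exact isClosed_le (by fun_prop) (by fun_prop)

section Kalman

variable {n p : ℕ} {A : Matrix (Fin n) (Fin n) ℝ} {C : Matrix (Fin p) (Fin n) ℝ}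
  {Qw : Matrix (Fin n) (Fin n) ℝ} {Rv : Matrix (Fin p) (Fin p) ℝ}
  {L : Matrix (Fin n) (Fin p) ℝ}

/-! ### Gramians, cost and flow field on the set of stabilizing gains -/

theorem powStable_of_mem (hL : L ∈ stabSet A C) : PowStable (Fcl A C L) :=
  pow_norm_eventually_le _ hL

theorem Pmat_eq (hL : L ∈ stabSet A C) :
    Pmat A C Qw Rv L = Fcl A C L * Pmat A C Qw Rv L * (Fcl A C L)ᵀ + Qeta C Qw Rv L :=
  (powStable_of_mem hL).tsum_eq _

theorem Wo_eq (hL : L ∈ stabSet A C) :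
    Wo A C L = (Fcl A C L)ᵀ * Wo A C L * Fcl A C L + (C * A)ᵀ * (C * A) := by
  have h := (powStable_of_mem hL).transpose.tsum_eq (Aᵀ * Cᵀ * C * A)
  rw [Matrix.transpose_transpose] at h
  simpa only [Wo, Matrix.transpose_mul, Matrix.mul_assoc] using h

theorem eq_Wo (hL : L ∈ stabSet A C) {W : Matrix (Fin n) (Fin n) ℝ}
    (hW : W = (Fcl A C L)ᵀ * W * Fcl A C L + (C * A)ᵀ * (C * A)) : W = Wo A C L := by
  have h := (powStable_of_mem hL).transpose.unique (X := W) (M := (C * A)ᵀ * (C * A))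
    (by rwa [Matrix.transpose_transpose])
  rw [Matrix.transpose_transpose] at h
  simpa only [Wo, Matrix.transpose_mul, Matrix.mul_assoc] using h

theorem Wo_posSemidef (hL : L ∈ stabSet A C) : (Wo A C L).PosSemidef := by
  have hs := (powStable_of_mem hL).transpose.summable (Aᵀ * Cᵀ * C * A)
  rw [Matrix.transpose_transpose] at hs
  refine isClosed_posSemidef.mem_of_tendsto hs.hasSum (Eventually.of_forall fun s => ?_)
  refine Matrix.posSemidef_sum _ fun k _ => ?_
  have h := Matrix.posSemidef_conjTranspose_mul_self (C * A * Fcl A C L ^ k)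
  simpa only [Matrix.conjTranspose_eq_transpose_of_trivial, Matrix.transpose_mul,
    Matrix.transpose_pow, Matrix.mul_assoc] using h

theorem Pmat_transpose (hQw : Qwᵀ = Qw) (hRv : Rvᵀ = Rv) (hL : L ∈ stabSet A C) :
    (Pmat A C Qw Rv L)ᵀ = Pmat A C Qw Rv L := by
  refine (powStable_of_mem hL).unique ?_
  have hQ : (Qeta C Qw Rv L)ᵀ = Qeta C Qw Rv L := by
    simp only [Qeta, Matrix.transpose_add, Matrix.transpose_mul, Matrix.transpose_transpose, hQw,
      hRv, Matrix.mul_assoc]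
  conv_lhs => rw [Pmat_eq hL]
  simp only [Matrix.transpose_add, Matrix.transpose_mul, Matrix.transpose_transpose,
    Matrix.mul_assoc, hQ]

theorem continuous_Fcl : Continuous (Fcl A C) := by
  unfold Fcl
  fun_prop

theorem continuous_Qeta : Continuous (Qeta C Qw Rv) := by
  unfold Qeta
  fun_prop

theorem continuousOn_Pmat : ContinuousOn (Pmat A C Qw Rv) (stabSet A C) :=
  continuousOn_lyapunov continuous_Fcl.continuousOn continuous_Qeta.continuousOn
    fun _ hL => powStable_of_mem hL

theorem continuousOn_Wo : ContinuousOn (Wo A C) (stabSet A C) := by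
  have h := continuousOn_lyapunov (s := stabSet A C) (F := fun L => (Fcl A C L)ᵀ)
    (M := fun _ => Aᵀ * Cᵀ * C * A) (continuous_Fcl.matrix_transpose).continuousOn
    continuousOn_const fun _ hL => (powStable_of_mem hL).transpose
  simp only [Matrix.transpose_transpose] at h
  exact h

theorem continuousOn_Kmat : ContinuousOn (Kmat A C Qw Rv) (stabSet A C) := by
  have hP := continuousOn_Pmat (A := A) (C := C) (Qw := Qw) (Rv := Rv)
  have hF := (continuous_Fcl (A := A) (C := C)).continuousOn (s := stabSet A C)
  unfold Kmat
  fun_prop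

/-- The right-hand side `2 W_o(L) K(L)` of the gradient flow. -/
def flowField (A : Matrix (Fin n) (Fin n) ℝ) (C : Matrix (Fin p) (Fin n) ℝ)
    (Qw : Matrix (Fin n) (Fin n) ℝ) (Rv : Matrix (Fin p) (Fin p) ℝ)
    (L : Matrix (Fin n) (Fin p) ℝ) : Matrix (Fin n) (Fin p) ℝ :=
  (2 : ℝ) • (Wo A C L * Kmat A C Qw Rv L)

theorem continuousOn_flowField : ContinuousOn (flowField A C Qw Rv) (stabSet A C) := by
  have hK := continuousOn_Kmat (A := A) (C := C) (Qw := Qw) (Rv := Rv)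
  have hW := continuousOn_Wo (A := A) (C := C)
  unfold flowField
  fun_prop

/-- The innovations loss up to an additive constant, in dual form: `Tr(W_o(L) Q_η(L))`, which equals
`Tr(C A P(L) Aᵀ Cᵀ)` by `trace_duality`. -/
def cost (A : Matrix (Fin n) (Fin n) ℝ) (C : Matrix (Fin p) (Fin n) ℝ)
    (Qw : Matrix (Fin n) (Fin n) ℝ) (Rv : Matrix (Fin p) (Fin p) ℝ)
    (L : Matrix (Fin n) (Fin p) ℝ) : ℝ :=
  (Wo A C L * Qeta C Qw Rv L).trace

/-- Duality of the two Lyapunov equations: `Tr(W M) = Tr(N X)`. -/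
theorem trace_duality {W F N X M : Matrix (Fin n) (Fin n) ℝ} (hW : W = Fᵀ * W * F + N)
    (hX : X = F * X * Fᵀ + M) : (W * M).trace = (N * X).trace := by
  have h1 : M = X - F * X * Fᵀ := eq_sub_of_add_eq' hX.symm
  have h2 : N = W - Fᵀ * W * F := eq_sub_of_add_eq' hW.symm
  have h3 : (W * (F * X * Fᵀ)).trace = (Fᵀ * W * F * X).trace := by
    rw [← Matrix.mul_assoc, Matrix.trace_mul_comm]
    simp only [Matrix.mul_assoc]
  rw [h1, Matrix.mul_sub, Matrix.trace_sub, h3, ← Matrix.trace_sub, ← Matrix.sub_mul, ← h2]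

/-- Exact expansion of the cost between two stabilizing gains. With `Δ = L₂ - L₁`, the difference
`P(L₂) - P(L₁)` solves the Lyapunov equation of `F(L₂)` with a source that is quadratic in `Δ`;
duality turns the trace of its output into a trace against `W_o(L₂)`. -/
theorem cost_sub (hQw : Qwᵀ = Qw) (hRv : Rvᵀ = Rv) {L₁ L₂ : Matrix (Fin n) (Fin p) ℝ}
    (h₁ : L₁ ∈ stabSet A C) (h₂ : L₂ ∈ stabSet A C) :
    cost A C Qw Rv L₂ - cost A C Qw Rv L₁ = (Wo A C L₂ *
      (-((L₂ - L₁) * (Kmat A C Qw Rv L₁)ᵀ) - Kmat A C Qw Rv L₁ * (L₂ - L₁)ᵀ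
        + (L₂ - L₁) * (C * A * Pmat A C Qw Rv L₁ * (C * A)ᵀ + C * Qw * Cᵀ + Rv)
          * (L₂ - L₁)ᵀ)).trace := by
  have hP₁ := Pmat_eq (Qw := Qw) (Rv := Rv) h₁
  have hP₂ := Pmat_eq (Qw := Qw) (Rv := Rv) h₂
  have hPt := Pmat_transpose hQw hRv h₁
  have d₁ := trace_duality (Wo_eq h₁) hP₁
  have d₂ := trace_duality (Wo_eq h₂) hP₂
  unfold cost
  rw [d₁, d₂, ← Matrix.trace_sub, ← Matrix.mul_sub]
  refine (trace_duality (Wo_eq h₂) ?_).symm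
  obtain ⟨Δ, rfl⟩ : ∃ Δ, L₂ = L₁ + Δ := ⟨L₂ - L₁, by abel⟩
  rw [add_sub_cancel_left]
  generalize Pmat A C Qw Rv (L₁ + Δ) = P₂ at *
  unfold Kmat
  generalize Pmat A C Qw Rv L₁ = P₁ at *
  have hF : Fcl A C (L₁ + Δ) = Fcl A C L₁ - Δ * (C * A) := by
    simp only [Fcl, Matrix.add_mul, Matrix.sub_mul, Matrix.mul_assoc]
    abel
  have hG : (1 : Matrix (Fin n) (Fin n) ℝ) - (L₁ + Δ) * C = (1 - L₁ * C) - Δ * C := by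
    rw [Matrix.add_mul]
    abel
  have key : (Fcl A C L₁ - Δ * (C * A)) * P₁ * (Fcl A C L₁ - Δ * (C * A))ᵀ
      + Qeta C Qw Rv (L₁ + Δ) = P₁ + (-(Δ * (Fcl A C L₁ * P₁ * Aᵀ * Cᵀ + (1 - L₁ * C) * Qw * Cᵀ
        - L₁ * Rv)ᵀ) - (Fcl A C L₁ * P₁ * Aᵀ * Cᵀ + (1 - L₁ * C) * Qw * Cᵀ - L₁ * Rv) * Δᵀ
        + Δ * (C * A * P₁ * (C * A)ᵀ + C * Qw * Cᵀ + Rv) * Δᵀ) := by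
    conv_rhs => enter [1]; rw [hP₁]
    unfold Qeta
    rw [hG]
    generalize Fcl A C L₁ = F
    generalize (1 : Matrix (Fin n) (Fin n) ℝ) - L₁ * C = G
    simp only [Matrix.transpose_add, Matrix.transpose_sub, Matrix.transpose_mul, hPt, hQw, hRv,
      Matrix.transpose_transpose, Matrix.mul_add, Matrix.add_mul, Matrix.mul_sub, Matrix.sub_mul,
      Matrix.mul_assoc]
    abel
  conv_lhs => rw [hP₂]
  rw [← hF] at key
  generalize Fcl A C (L₁ + Δ) = F₂ at *
  rw [eq_sub_of_add_eq' key.symm]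
  noncomm_ring

/-! ### Compactness of the sublevel sets -/

/-- In the seminorm `X ↦ ‖B X‖` of a Gramian `Bᵀ B`, both `F(L)` and the output map `C A` are
contractions. Since `A = F(L) + L C A`, the matrix `A` is then bounded by `1 + ‖B L‖`, a bound that
sees `L` only through `B L`. -/
theorem norm_output_le {B : Matrix (Fin n) (Fin n) ℝ} {l : Type*} [Fintype l]
    (hB : Bᵀ * B = (Fcl A C L)ᵀ * (Bᵀ * B) * Fcl A C L + (C * A)ᵀ * (C * A))
    (X : Matrix (Fin n) l ℝ) (k : ℕ) :
    ‖C * A * A ^ k * X‖ ≤ (1 + ‖B * L‖) ^ k * ‖B * X‖ := by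
  have hE : ∀ Y : Matrix (Fin n) l ℝ,
      ‖B * Y‖ ^ 2 = ‖B * (Fcl A C L * Y)‖ ^ 2 + ‖C * A * Y‖ ^ 2 := fun Y => by
    refine energy_balance ?_ Y
    simpa only [Matrix.conjTranspose_eq_transpose_of_trivial] using hB
  have h1 : ∀ Y : Matrix (Fin n) l ℝ, ‖C * A * Y‖ ≤ ‖B * Y‖ := fun Y =>
    (sq_le_sq₀ (norm_nonneg _) (norm_nonneg _)).1 (by
      rw [hE Y]
      exact le_add_of_nonneg_left (sq_nonneg _))
  have h2 : ∀ Y : Matrix (Fin n) l ℝ, ‖B * (Fcl A C L * Y)‖ ≤ ‖B * Y‖ := fun Y =>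
    (sq_le_sq₀ (norm_nonneg _) (norm_nonneg _)).1 (by
      rw [hE Y]
      exact le_add_of_nonneg_right (sq_nonneg _))
  have h3 : ∀ k : ℕ, ‖B * (A ^ k * X)‖ ≤ (1 + ‖B * L‖) ^ k * ‖B * X‖ := by
    intro k
    induction k with
    | zero => simp
    | succ k ih =>
      set Y := A ^ k * X with hY
      have hA : B * (A ^ (k + 1) * X) = B * (Fcl A C L * Y) + B * L * (C * A * Y) := by
        rw [hY, pow_succ']
        simp only [Fcl, Matrix.sub_mul, Matrix.mul_sub, Matrix.mul_assoc, Matrix.one_mul]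
        abel
      calc ‖B * (A ^ (k + 1) * X)‖ ≤ ‖B * (Fcl A C L * Y)‖ + ‖B * L * (C * A * Y)‖ := by
            rw [hA]; exact norm_add_le _ _
        _ ≤ ‖B * Y‖ + ‖B * L‖ * ‖B * Y‖ := by
            refine add_le_add (h2 Y) ((Matrix.frobenius_norm_mul _ _).trans ?_)
            gcongr
            exact h1 Y
        _ = (1 + ‖B * L‖) * ‖B * Y‖ := by ring
        _ ≤ (1 + ‖B * L‖) * ((1 + ‖B * L‖) ^ k * ‖B * X‖) := by gcongr
        _ = (1 + ‖B * L‖) ^ (k + 1) * ‖B * X‖ := by ring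
  rw [Matrix.mul_assoc (C * A)]
  exact (h1 _).trans (h3 k)

/-- Observability makes the seminorm `X ↦ ‖B X‖` dominate the norm, with a constant that depends on
`L` only through `‖B L‖`. -/
theorem norm_le_of_gramian {B : Matrix (Fin n) (Fin n) ℝ} {l : Type*} [Fintype l]
    (hB : Bᵀ * B = (Fcl A C L)ᵀ * (Bᵀ * B) * Fcl A C L + (C * A)ᵀ * (C * A))
    {N : ℕ} {M : ℕ → Matrix (Fin n) (Fin p) ℝ}
    (hM : ∑ k ∈ Finset.range N, M k * (C * A * A ^ k) = 1) (X : Matrix (Fin n) l ℝ) :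
    ‖X‖ ≤ (∑ k ∈ Finset.range N, ‖M k‖ * (1 + ‖B * L‖) ^ k) * ‖B * X‖ := by
  calc ‖X‖ = ‖∑ k ∈ Finset.range N, M k * (C * A * A ^ k * X)‖ := by
        conv_lhs => rw [← Matrix.one_mul X, ← hM, Matrix.sum_mul]
        simp only [Matrix.mul_assoc]
    _ ≤ ∑ k ∈ Finset.range N, ‖M k‖ * ((1 + ‖B * L‖) ^ k * ‖B * X‖) := by
        refine norm_sum_le_of_le _ fun k _ => (Matrix.frobenius_norm_mul _ _).trans ?_
        gcongr
        exact norm_output_le hB X k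
    _ = _ := by
        rw [Finset.sum_mul]
        simp only [mul_assoc]

/-- A positive semidefinite solution of the Lyapunov equation forces `L` to be stabilizing. An
eigenvector of `F(L)` with eigenvalue of modulus `≥ 1` has zero output by the energy balance, so it
is an eigenvector of `A` in the unobservable subspace, hence zero. -/
theorem mem_stabSet_of_gramian {B : Matrix (Fin n) (Fin n) ℝ}
    (hB : Bᵀ * B = (Fcl A C L)ᵀ * (Bᵀ * B) * Fcl A C L + (C * A)ᵀ * (C * A))
    {N : ℕ} {M : ℕ → Matrix (Fin n) (Fin p) ℝ}
    (hM : ∑ k ∈ Finset.range N, M k * (C * A * A ^ k) = 1) : L ∈ stabSet A C := by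
  intro μ hμ
  by_contra! hge
  set F := Fcl A C L with hF
  let φ := Complex.ofRealHom
  change μ ∈ spectrum ℂ (F.map φ) at hμ
  rw [spectrum.mem_iff, Matrix.isUnit_iff_isUnit_det, isUnit_iff_ne_zero, not_not] at hμ
  obtain ⟨v, hv0, hv⟩ := Matrix.exists_mulVec_eq_zero_iff.2 hμ
  let X : Matrix (Fin n) Unit ℂ := Matrix.replicateCol Unit v
  have hFX : F.map φ * X = μ • X := by
    rw [Matrix.sub_mulVec, sub_eq_zero, Matrix.algebraMap_eq_diagonal] at hv
    ext i j
    have := congrFun hv i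
    simp only [Matrix.mulVec_diagonal] at this
    simpa [X, Matrix.mul_apply, Matrix.mulVec, dotProduct] using this.symm
  have hct : ∀ {a b : ℕ} (Y : Matrix (Fin a) (Fin b) ℝ), (Y.map φ)ᴴ = Yᵀ.map φ := by
    intro a b Y
    ext i j
    simp [φ]
  have hBc : (B.map φ)ᴴ * B.map φ = (F.map φ)ᴴ * ((B.map φ)ᴴ * B.map φ) * F.map φ
      + ((C * A).map φ)ᴴ * (C * A).map φ := by
    simp only [hct, ← Matrix.map_mul]
    rw [← Matrix.map_add φ (map_add φ), ← hB]
  have hE := energy_balance hBc X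
  rw [hFX, Matrix.mul_smul, norm_smul] at hE
  have hH : (C * A).map φ * X = 0 := by
    rw [← norm_eq_zero]
    have h1 : ‖B.map φ * X‖ ≤ ‖μ‖ * ‖B.map φ * X‖ := le_mul_of_one_le_left (norm_nonneg _) hge
    have h2 : ‖B.map φ * X‖ ^ 2 ≤ (‖μ‖ * ‖B.map φ * X‖) ^ 2 := by gcongr
    have h3 : ‖(C * A).map φ * X‖ ^ 2 = 0 := le_antisymm (by linarith) (sq_nonneg _)
    exact pow_eq_zero_iff two_ne_zero |>.1 h3
  have hA : A.map φ * X = μ • X := by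
    have hAF : A = F + L * (C * A) := by
      simp only [hF, Fcl, Matrix.sub_mul, Matrix.mul_assoc, Matrix.one_mul]
      abel
    rw [hAF, Matrix.map_add φ (map_add φ), Matrix.map_mul, Matrix.add_mul,
      Matrix.mul_assoc (L.map φ), hH, hFX, Matrix.mul_zero, add_zero]
  have hAk : ∀ k : ℕ, (A ^ k).map φ * X = μ ^ k • X := by
    intro k
    induction k with
    | zero => simp [Matrix.map_one]
    | succ k ih =>
      rw [pow_succ, Matrix.map_mul, Matrix.mul_assoc, hA, Matrix.mul_smul, ih, smul_smul, pow_succ']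
  have hX : X = 0 := by
    have h1 : (∑ k ∈ Finset.range N, M k * (C * A * A ^ k)).map φ = 1 := by
      rw [hM]; simp [Matrix.map_one]
    have h2 : (∑ k ∈ Finset.range N, M k * (C * A * A ^ k)).map φ * X = 0 := by
      have h3 : (∑ k ∈ Finset.range N, M k * (C * A * A ^ k)).map φ
          = ∑ k ∈ Finset.range N, (M k * (C * A * A ^ k)).map φ := by
        ext i j
        simp only [Matrix.map_apply, Matrix.sum_apply, map_sum]
      rw [h3, Matrix.sum_mul]
      refine Finset.sum_eq_zero fun k _ => ?_
      rw [Matrix.map_mul, Matrix.map_mul, Matrix.mul_assoc, Matrix.mul_assoc, hAk, Matrix.mul_smul,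
        hH, smul_zero, Matrix.mul_zero]
    rwa [h1, Matrix.one_mul] at h2
  refine hv0 (funext fun i => ?_)
  exact congrFun (congrFun hX i) ()

theorem trace_gramian_eq {B T : Matrix (Fin n) (Fin n) ℝ} {S : Matrix (Fin p) (Fin p) ℝ} :
    (Bᵀ * B * Qeta C (T * Tᵀ) (S * Sᵀ) L).trace
      = ‖B * (1 - L * C) * T‖ ^ 2 + ‖B * L * S‖ ^ 2 := by
  rw [← Matrix.frobenius_norm_transpose (B * (1 - L * C) * T),
    ← Matrix.frobenius_norm_transpose (B * L * S), sq_frobenius, sq_frobenius, ← Matrix.trace_add,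
    Matrix.mul_assoc Bᵀ, Matrix.trace_mul_comm]
  congr 1
  simp only [Qeta, Matrix.transpose_mul, Matrix.transpose_transpose, Matrix.mul_assoc,
    Matrix.mul_add, Matrix.add_mul]

theorem cost_nonneg (hQw : Qw.PosDef) (hRv : Rv.PosDef) (hL : L ∈ stabSet A C) :
    0 ≤ cost A C Qw Rv L := by
  obtain ⟨B, hB⟩ := exists_factor_of_posSemidef (Wo_posSemidef hL)
  obtain ⟨T, -, rfl, -⟩ := exists_factor_of_posDef hQw
  obtain ⟨S, -, rfl, -⟩ := exists_factor_of_posDef hRv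
  rw [cost, hB, trace_gramian_eq]
  positivity

/-- The sublevel set is the projection of the set of pairs `(L, W)` with `W ≥ 0` a solution of the
Lyapunov equation and `Tr(W Q_η(L)) ≤ c`. That set is closed, since stability is implied rather than
imposed. It is bounded: for `W = Bᵀ B` the trace controls `B (1 - L C)` and `B L`, hence `B` and,
by observability, `L`. -/
theorem isCompact_sublevel (hQw : Qw.PosDef) (hRv : Rv.PosDef)
    (hobs : ∀ v : Fin n → ℝ, (∀ k : ℕ, (C * A * A ^ k).mulVec v = 0) → v = 0) (c : ℝ) :
    IsCompact {L | L ∈ stabSet A C ∧ cost A C Qw Rv L ≤ c} := by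
  obtain ⟨N, M, hM⟩ := exists_observability_inverse A (C * A) hobs
  let Z : Set (Matrix (Fin n) (Fin p) ℝ × Matrix (Fin n) (Fin n) ℝ) :=
    {x | x.2.PosSemidef ∧ x.2 = (Fcl A C x.1)ᵀ * x.2 * Fcl A C x.1 + (C * A)ᵀ * (C * A) ∧
      (x.2 * Qeta C Qw Rv x.1).trace ≤ c}
  have hZ : {L | L ∈ stabSet A C ∧ cost A C Qw Rv L ≤ c} = Prod.fst '' Z := by
    ext L
    constructor
    · rintro ⟨hL, hc⟩
      exact ⟨(L, Wo A C L), ⟨Wo_posSemidef hL, Wo_eq hL, hc⟩, rfl⟩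
    · rintro ⟨⟨L, W⟩, ⟨h1, h2, h3⟩, rfl⟩
      obtain ⟨B, rfl⟩ := exists_factor_of_posSemidef h1
      have hL : L ∈ stabSet A C := mem_stabSet_of_gramian h2 hM
      refine ⟨hL, ?_⟩
      rw [cost, ← eq_Wo hL h2]
      exact h3
  have hclosed : IsClosed Z := by
    have hFc := (continuous_Fcl (A := A) (C := C))
    have hQc := (continuous_Qeta (C := C) (Qw := Qw) (Rv := Rv))
    have h2 : IsClosed {x : Matrix (Fin n) (Fin p) ℝ × Matrix (Fin n) (Fin n) ℝ |
        x.2 = (Fcl A C x.1)ᵀ * x.2 * Fcl A C x.1 + (C * A)ᵀ * (C * A)} :=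
      isClosed_eq (by fun_prop) (by fun_prop)
    have h3 : IsClosed {x : Matrix (Fin n) (Fin p) ℝ × Matrix (Fin n) (Fin n) ℝ |
        (x.2 * Qeta C Qw Rv x.1).trace ≤ c} :=
      isClosed_le (by fun_prop) continuous_const
    exact (isClosed_posSemidef.preimage continuous_snd).inter (h2.inter h3)
  have hbdd : Bornology.IsBounded Z := by
    obtain ⟨T, T', rfl, hT⟩ := exists_factor_of_posDef hQw
    obtain ⟨S, S', rfl, hS⟩ := exists_factor_of_posDef hRv
    set b := √c * ‖S'‖ with hb
    set d := √c * ‖T'‖ + b * ‖C‖ with hd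
    refine (Metric.isBounded_closedBall (x := (0 : Matrix (Fin n) (Fin p) ℝ))
      (r := (∑ k ∈ Finset.range N, ‖M k‖ * (1 + b) ^ k) * b)).prod
      (Metric.isBounded_closedBall (x := (0 : Matrix (Fin n) (Fin n) ℝ)) (r := d * d))
      |>.subset ?_
    rintro ⟨L, W⟩ ⟨h1, h2, h3⟩
    obtain ⟨B, rfl⟩ := exists_factor_of_posSemidef h1
    dsimp only at h2 h3
    rw [trace_gramian_eq] at h3
    have hBT : ‖B * (1 - L * C) * T‖ ≤ √c :=
      Real.le_sqrt_of_sq_le (by nlinarith [sq_nonneg ‖B * L * S‖])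
    have hBS : ‖B * L * S‖ ≤ √c :=
      Real.le_sqrt_of_sq_le (by nlinarith [sq_nonneg ‖B * (1 - L * C) * T‖])
    have hBL : ‖B * L‖ ≤ b := by
      calc ‖B * L‖ = ‖B * L * S * S'‖ := by rw [Matrix.mul_assoc (B * L), hS, Matrix.mul_one]
        _ ≤ ‖B * L * S‖ * ‖S'‖ := Matrix.frobenius_norm_mul _ _
        _ ≤ b := by rw [hb]; gcongr
    have hBG : ‖B * (1 - L * C)‖ ≤ √c * ‖T'‖ := by
      calc ‖B * (1 - L * C)‖ = ‖B * (1 - L * C) * T * T'‖ := by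
            rw [Matrix.mul_assoc (B * (1 - L * C)), hT, Matrix.mul_one]
        _ ≤ ‖B * (1 - L * C) * T‖ * ‖T'‖ := Matrix.frobenius_norm_mul _ _
        _ ≤ _ := by gcongr
    have hBn : ‖B‖ ≤ d := by
      calc ‖B‖ = ‖B * (1 - L * C) + B * L * C‖ := by
            congr 1
            simp only [Matrix.mul_sub, Matrix.mul_one, Matrix.mul_assoc]
            abel
        _ ≤ ‖B * (1 - L * C)‖ + ‖B * L * C‖ := norm_add_le _ _
        _ ≤ ‖B * (1 - L * C)‖ + ‖B * L‖ * ‖C‖ := by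
            gcongr; exact Matrix.frobenius_norm_mul _ _
        _ ≤ d := by rw [hd]; gcongr
    refine ⟨mem_closedBall_zero_iff.2 ?_, mem_closedBall_zero_iff.2 ?_⟩
    · refine (norm_le_of_gramian h2 hM L).trans ?_
      gcongr
    · refine (Matrix.frobenius_norm_mul _ _).trans ?_
      rw [Matrix.frobenius_norm_transpose]
      gcongr
  have : ProperSpace (Matrix (Fin n) (Fin p) ℝ) := FiniteDimensional.proper ℝ _
  have : ProperSpace (Matrix (Fin n) (Fin n) ℝ) := FiniteDimensional.proper ℝ _
  rw [hZ]
  exact (Metric.isCompact_of_isClosed_isBounded hclosed hbdd).image continuous_fst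

/-- By observability the Gramian has trivial kernel, so the zeros of the flow are those of `K`. -/
theorem Kmat_eq_zero_of_flowField
    (hobs : ∀ v : Fin n → ℝ, (∀ k : ℕ, (C * A * A ^ k).mulVec v = 0) → v = 0)
    (hL : L ∈ stabSet A C) (h : flowField A C Qw Rv L = 0) : Kmat A C Qw Rv L = 0 := by
  obtain ⟨N, M, hM⟩ := exists_observability_inverse A (C * A) hobs
  obtain ⟨B, hB⟩ := exists_factor_of_posSemidef (Wo_posSemidef hL)
  have hW := Wo_eq hL
  rw [hB] at hW
  have h0 : Wo A C L * Kmat A C Qw Rv L = 0 :=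
    (smul_eq_zero.1 h).resolve_left two_ne_zero
  have h1 : ‖B * Kmat A C Qw Rv L‖ = 0 := by
    rw [← pow_eq_zero_iff two_ne_zero, sq_frobenius, Matrix.transpose_mul, Matrix.mul_assoc,
      ← Matrix.mul_assoc Bᵀ, ← hB, h0]
    simp
  have h2 := norm_le_of_gramian hW hM (Kmat A C Qw Rv L)
  rw [h1, mul_zero] at h2
  exact norm_le_zero_iff.1 h2

/-! ### Dissipation along the flow and convergence -/

theorem tendsto_trace_increment {α : Type*} {l : Filter α} {W : α → Matrix (Fin n) (Fin n) ℝ}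
    {D E : α → Matrix (Fin n) (Fin p) ℝ} {W₀ : Matrix (Fin n) (Fin n) ℝ}
    {D₀ E₀ K : Matrix (Fin n) (Fin p) ℝ} {S : Matrix (Fin p) (Fin p) ℝ}
    (hW : Tendsto W l (nhds W₀)) (hD : Tendsto D l (nhds D₀)) (hE : Tendsto E l (nhds E₀)) :
    Tendsto (fun s => (W s * (-(D s * Kᵀ) - K * (D s)ᵀ + D s * S * (E s)ᵀ)).trace) l
      (nhds ((W₀ * (-(D₀ * Kᵀ) - K * D₀ᵀ + D₀ * S * E₀ᵀ)).trace)) := by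
  let f : Matrix (Fin n) (Fin n) ℝ × Matrix (Fin n) (Fin p) ℝ × Matrix (Fin n) (Fin p) ℝ → ℝ :=
    fun x => (x.1 * (-(x.2.1 * Kᵀ) - K * x.2.1ᵀ + x.2.1 * S * x.2.2ᵀ)).trace
  have hcont : Continuous f := by fun_prop
  have hx : Tendsto (fun s => (W s, D s, E s)) l (nhds (W₀, D₀, E₀)) :=
    hW.prodMk_nhds (hD.prodMk_nhds hE)
  have h := (hcont.tendsto (W₀, D₀, E₀)).comp hx
  exact h

/-- Along the flow the cost decreases at the rate `‖L'‖²`. The difference quotient of the cost is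
computed with `cost_sub`, so only continuity of `W_o` is needed, not differentiability. -/
theorem hasDerivAt_cost (hQw : Qwᵀ = Qw) (hRv : Rvᵀ = Rv) {Lt : ℝ → Matrix (Fin n) (Fin p) ℝ}
    {t : ℝ} (hmem : ∀ᶠ s in nhds t, Lt s ∈ stabSet A C)
    (hd : HasDerivAt Lt (flowField A C Qw Rv (Lt t)) t) :
    HasDerivAt (fun s => cost A C Qw Rv (Lt s)) (-‖flowField A C Qw Rv (Lt t)‖ ^ 2) t := by
  have ht : Lt t ∈ stabSet A C := hmem.self_of_nhds
  set K := Kmat A C Qw Rv (Lt t) with hK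
  set V := flowField A C Qw Rv (Lt t) with hV
  set S := C * A * Pmat A C Qw Rv (Lt t) * (C * A)ᵀ + C * Qw * Cᵀ + Rv with hS
  have hsl : Tendsto (slope Lt t) (nhdsWithin t {t}ᶜ) (nhds V) := hasDerivAt_iff_tendsto_slope.1 hd
  have hWc : Tendsto (fun s => Wo A C (Lt s)) (nhdsWithin t {t}ᶜ) (nhds (Wo A C (Lt t))) := by
    have h1 : Tendsto Lt (nhds t) (nhdsWithin (Lt t) (stabSet A C)) :=
      tendsto_nhdsWithin_iff.2 ⟨hd.continuousAt, hmem⟩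
    exact ((continuousOn_Wo (Lt t) ht).tendsto.comp h1).mono_left nhdsWithin_le_nhds
  have hΔ : Tendsto (fun s => Lt s - Lt t) (nhdsWithin t {t}ᶜ) (nhds 0) := by
    have h1 := (hd.continuousAt.tendsto.sub_const (Lt t)).mono_left
      (nhdsWithin_le_nhds (s := {t}ᶜ))
    rwa [sub_self] at h1
  rw [hasDerivAt_iff_tendsto_slope]
  have hlim : Tendsto (fun s => (Wo A C (Lt s) * (-(slope Lt t s * Kᵀ) - K * (slope Lt t s)ᵀ
      + slope Lt t s * S * (Lt s - Lt t)ᵀ)).trace) (nhdsWithin t {t}ᶜ)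
      (nhds ((Wo A C (Lt t) * (-(V * Kᵀ) - K * Vᵀ
        + V * S * (0 : Matrix (Fin n) (Fin p) ℝ)ᵀ)).trace)) :=
    tendsto_trace_increment hWc hsl hΔ
  have hval : (Wo A C (Lt t) * (-(V * Kᵀ) - K * Vᵀ
      + V * S * (0 : Matrix (Fin n) (Fin p) ℝ)ᵀ)).trace = -‖V‖ ^ 2 := by
    have hsym : (Wo A C (Lt t))ᵀ = Wo A C (Lt t) := by
      have := (Wo_posSemidef ht).1
      rwa [Matrix.IsHermitian, Matrix.conjTranspose_eq_transpose_of_trivial] at this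
    have hVW : V = (2 : ℝ) • (Wo A C (Lt t) * K) := rfl
    have h1 : (Wo A C (Lt t) * (V * Kᵀ)).trace = (Vᵀ * (Wo A C (Lt t) * K)).trace := by
      rw [← Matrix.trace_transpose]
      simp only [Matrix.transpose_mul, Matrix.transpose_transpose, hsym]
      rw [Matrix.mul_assoc, Matrix.trace_mul_comm, Matrix.mul_assoc]
    have h2 : (Wo A C (Lt t) * (K * Vᵀ)).trace = (Vᵀ * (Wo A C (Lt t) * K)).trace := by
      rw [← Matrix.mul_assoc, Matrix.trace_mul_comm]
    have h3 : ‖V‖ ^ 2 = 2 * (Vᵀ * (Wo A C (Lt t) * K)).trace := by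
      rw [sq_frobenius]
      conv_lhs => enter [1, 2]; rw [hVW]
      rw [Matrix.mul_smul, Matrix.trace_smul, smul_eq_mul]
    rw [Matrix.transpose_zero, Matrix.mul_zero, add_zero, Matrix.mul_sub, Matrix.mul_neg,
      Matrix.trace_sub, Matrix.trace_neg, h1, h2, h3]
    ring
  rw [hval] at hlim
  refine hlim.congr' ?_
  filter_upwards [hmem.filter_mono nhdsWithin_le_nhds] with s hs
  rw [slope_def_module (fun s => cost A C Qw Rv (Lt s)), cost_sub hQw hRv ht hs, slope_def_module,
    ← hK, ← hS, ← Matrix.trace_smul, ← Matrix.mul_smul]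
  congr 2
  generalize Lt s - Lt t = Δ
  simp only [smul_add, smul_sub, smul_neg, Matrix.smul_mul, Matrix.mul_smul, Matrix.transpose_smul]

end Kalman

end

/-- A LaSalle-type principle. A trajectory of `f` in a compact set along which a function bounded
below decreases at the rate `‖f‖²` converges to the only zero of `f` in that set: each visit far
from the zero lasts at least a time `τ`, by the Lipschitz bound, and costs a fixed amount of `J`. -/
theorem tendsto_of_dissipation {E : Type*} [NormedAddCommGroup E] [NormedSpace ℝ E]
    {Ω : Set E} (hΩ : IsCompact Ω) {f : E → E} (hf : ContinuousOn f Ω) {x₀ : E}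
    (hzero : ∀ y ∈ Ω, f y = 0 → y = x₀) {x : ℝ → E} {J : ℝ → ℝ} {a : ℝ}
    (hx : ∀ t, a ≤ t → x t ∈ Ω) (hd : ∀ t, a ≤ t → HasDerivAt x (f (x t)) t)
    (hJ : ∀ t, a ≤ t → HasDerivAt J (-‖f (x t)‖ ^ 2) t) (hJ0 : ∀ t, a ≤ t → 0 ≤ J t) :
    Tendsto x atTop (nhds x₀) := by
  obtain ⟨M₀, hM₀⟩ := hΩ.exists_bound_of_continuousOn hf
  set M := max M₀ 1 with hM
  have hMpos : 0 < M := lt_of_lt_of_le one_pos (le_max_right _ _)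
  have hlip : ∀ t, a ≤ t → ∀ s, t ≤ s → ‖x s - x t‖ ≤ M * (s - t) := by
    intro t ht s hs
    have h := (convex_Icc t s).norm_image_sub_le_of_norm_hasDerivWithin_le
      (f := x) (f' := fun u => f (x u)) (C := M)
      (fun u hu => (hd u (ht.trans hu.1)).hasDerivWithinAt)
      (fun u hu => (hM₀ _ (hx u (ht.trans hu.1))).trans (le_max_left _ _))
      (Set.left_mem_Icc.2 hs) (Set.right_mem_Icc.2 hs)
    rwa [Real.norm_of_nonneg (sub_nonneg.2 hs)] at h
  -- Speed at least `m` on `[t, s]` costs `J` at least `m² (s - t)`.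
  have hdrop : ∀ m : ℝ, 0 ≤ m → ∀ t, a ≤ t → ∀ s, t ≤ s →
      (∀ u ∈ Set.Icc t s, m ≤ ‖f (x u)‖) → J s ≤ J t - m ^ 2 * (s - t) := by
    intro m hm t ht s hs hu
    have hanti : AntitoneOn (fun u => J u + m ^ 2 * u) (Set.Icc t s) := by
      have hder : ∀ u ∈ Set.Icc t s,
          HasDerivAt (fun u => J u + m ^ 2 * u) (-‖f (x u)‖ ^ 2 + m ^ 2 * 1) u := fun u hu' =>
        (hJ u (ht.trans hu'.1)).add ((hasDerivAt_id u).const_mul (m ^ 2))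
      refine antitoneOn_of_deriv_nonpos (convex_Icc t s)
        (fun u hu' => (hder u hu').continuousAt.continuousWithinAt)
        (fun u hu' => (hder u (interior_subset hu')).differentiableAt.differentiableWithinAt)
        fun u hu' => ?_
      rw [(hder u (interior_subset hu')).deriv]
      have : m ^ 2 ≤ ‖f (x u)‖ ^ 2 := by
        have := hu u (interior_subset hu')
        gcongr
      linarith
    have h := hanti (Set.left_mem_Icc.2 hs) (Set.right_mem_Icc.2 hs) hs
    simp only at h
    linarith
  rw [Metric.tendsto_nhds]
  intro ε hε
  by_contra hcon
  have hfreq : ∃ᶠ t in atTop, ε ≤ dist (x t) x₀ := by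
    simpa only [not_eventually, not_lt] using hcon
  obtain ⟨m, hmpos, hm⟩ : ∃ m : ℝ, 0 < m ∧ ∀ y ∈ Ω, ε / 2 ≤ dist y x₀ → m ≤ ‖f y‖ := by
    have hΩ' : IsCompact (Ω \ Metric.ball x₀ (ε / 2)) := hΩ.diff Metric.isOpen_ball
    rcases (Ω \ Metric.ball x₀ (ε / 2)).eq_empty_or_nonempty with he | hne
    · refine ⟨1, one_pos, fun y hy hd' => ?_⟩
      have : y ∈ Ω \ Metric.ball x₀ (ε / 2) := ⟨hy, by simpa using hd'⟩
      rw [he] at this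
      exact this.elim
    · obtain ⟨z, hz, hmin⟩ := hΩ'.exists_isMinOn hne (hf.mono Set.sdiff_subset).norm
      refine ⟨‖f z‖, norm_pos_iff.2 fun h0 => hz.2 ?_, fun y hy hd' => hmin ⟨hy, by simpa using hd'⟩⟩
      rw [hzero z hz.1 h0]
      exact Metric.mem_ball_self (by positivity)
  set τ := ε / (2 * M) with hτ
  have hτpos : 0 < τ := by positivity
  have hbdd : BddBelow (J '' Set.Ici a) := ⟨0, by rintro _ ⟨t, ht, rfl⟩; exact hJ0 t ht⟩
  -- From `t₀` on, `J` can no longer drop by `m² τ`.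
  obtain ⟨_, ⟨t₀, ht₀, rfl⟩, hlt⟩ := exists_lt_of_csInf_lt
    ((Set.nonempty_Ici (a := a)).image J)
    (lt_add_of_pos_right (sInf (J '' Set.Ici a)) (by positivity : 0 < m ^ 2 * τ))
  obtain ⟨t, hfar, ht⟩ := (hfreq.and_eventually (eventually_ge_atTop t₀)).exists
  have hat : a ≤ t := le_trans ht₀ ht
  have h1 : J t ≤ J t₀ := by
    have := hdrop 0 le_rfl t₀ ht₀ t ht fun u _ => norm_nonneg _
    linarith
  have h2 : J (t + τ) ≤ J t - m ^ 2 * (t + τ - t) := by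
    refine hdrop m hmpos.le t hat (t + τ) (by linarith) fun u hu => hm _ (hx u (hat.trans hu.1)) ?_
    have h3 : dist (x u) (x t) ≤ ε / 2 := by
      rw [dist_eq_norm]
      calc ‖x u - x t‖ ≤ M * (u - t) := hlip t hat u hu.1
        _ ≤ M * τ := by gcongr; linarith [hu.2]
        _ = ε / 2 := by rw [hτ]; field_simp
    have h4 := dist_triangle (x t) (x u) x₀
    rw [dist_comm (x t) (x u)] at h4
    linarith
  have h5 : sInf (J '' Set.Ici a) ≤ J (t + τ) :=
    csInf_le hbdd ⟨t + τ, hat.trans (by linarith), rfl⟩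
  rw [add_sub_cancel_left] at h2
  linarith

/-- **Convergence of the gradient flow to the Kalman gain (Theorem 2, convergence part).**
Assume `(A, C A)` is observable, `L_KF ∈ 𝒮` is the unique stabilizing gain with
`K(L_KF) = 0`, and `L(t)` is a continuously differentiable trajectory in `𝒮` solving
`L'(t) = 2 W_o(L(t)) K(L(t))`.  Then `L(t) → L_KF` as `t → ∞`. -/
theorem gradient_flow_converges_to_kalman_gain {n p : ℕ}
    (A : Matrix (Fin n) (Fin n) ℝ) (C : Matrix (Fin p) (Fin n) ℝ)
    (Qw : Matrix (Fin n) (Fin n) ℝ) (hQw : Qw.PosDef)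
    (Rv : Matrix (Fin p) (Fin p) ℝ) (hRv : Rv.PosDef)
    (hobs : ∀ v : Fin n → ℝ, (∀ k : ℕ, (C * A * A ^ k).mulVec v = 0) → v = 0)
    (LKF : Matrix (Fin n) (Fin p) ℝ) (hKF : LKF ∈ stabSet A C)
    (hKKF : Kmat A C Qw Rv LKF = 0)
    (huniq : ∀ L ∈ stabSet A C, Kmat A C Qw Rv L = 0 → L = LKF)
    (Lt : ℝ → Matrix (Fin n) (Fin p) ℝ)
    (hmem : ∀ t : ℝ, 0 ≤ t → Lt t ∈ stabSet A C)
    (hflow : ∀ t : ℝ, 0 ≤ t →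
      HasDerivAt Lt ((2 : ℝ) • (Wo A C (Lt t) * Kmat A C Qw Rv (Lt t))) t) :
    Tendsto Lt atTop (nhds LKF) := by
  have hQs : Qwᵀ = Qw := by
    have := hQw.isHermitian
    rwa [Matrix.IsHermitian, Matrix.conjTranspose_eq_transpose_of_trivial] at this
  have hRs : Rvᵀ = Rv := by
    have := hRv.isHermitian
    rwa [Matrix.IsHermitian, Matrix.conjTranspose_eq_transpose_of_trivial] at this
  -- The times `t ≥ 1` are interior to `[0, ∞)`, so the trajectory is stabilizing on a neighbourhood.
  have hcost : ∀ t : ℝ, 1 ≤ t → HasDerivAt (fun s => cost A C Qw Rv (Lt s))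
      (-‖flowField A C Qw Rv (Lt t)‖ ^ 2) t := fun t ht =>
    hasDerivAt_cost hQs hRs
      ((eventually_gt_nhds (by linarith : (0 : ℝ) < t)).mono fun s hs => hmem s hs.le)
      (hflow t (by linarith))
  have hanti : AntitoneOn (fun s => cost A C Qw Rv (Lt s)) (Set.Ici 1) := by
    refine antitoneOn_of_deriv_nonpos (convex_Ici 1)
      (fun u hu => (hcost u hu).continuousAt.continuousWithinAt)
      (fun u hu => (hcost u (interior_subset hu)).differentiableAt.differentiableWithinAt)
      fun u hu => ?_
    rw [(hcost u (interior_subset hu)).deriv]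
    exact neg_nonpos.2 (sq_nonneg _)
  refine tendsto_of_dissipation (a := 1)
    (isCompact_sublevel hQw hRv hobs (cost A C Qw Rv (Lt 1)))
    (continuousOn_flowField.mono fun _ h => h.1)
    (fun L hL h0 => huniq L hL.1 (Kmat_eq_zero_of_flowField hobs hL.1 h0))
    (fun t ht => ⟨hmem t (by linarith), hanti Set.self_mem_Ici ht ht⟩)
    (fun t ht => hflow t (by linarith)) hcost
    (fun t ht => cost_nonneg hQw hRv (hmem t (by linarith)))

end
end

section
/- Positive definiteness of the observability Gramian. Let F be a real n×n matrix all of whose complex eigenvalues have modulus < 1, and let C̃ be a real p×n matrix such that the pair (F, C̃) is observable. Then the series W := ∑_{k≥0} (F^T)^k C̃^T C̃ F^k is summable, W satisfies the Lyapunov equation W = F^T W F + C̃^T C̃, and W is symmetric positive definite. -/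
/-!
By Gelfand's formula, a spectrum inside the open unit disc gives `‖F ^ k‖ ≤ r ^ k` eventually, for
some `r < 1` (`exists_eventually_norm_pow_le`). Hence the terms of the Gramian are dominated by a
geometric series (`summable_gramian`). The Frobenius norm is used because it is submultiplicative,
invariant under transposition, and unchanged by viewing a real matrix as a complex one.

The Lyapunov equation is obtained by splitting off the term `k = 0`. The quadratic form of the
Gramian at `v` is `∑ₖ |C̃ Fᵏ v|²`, a sum of nonnegative terms which, by observability, do not all
vanish when `v ≠ 0`.
-/

open Matrix

section Decay

attribute [local instance] Matrix.frobeniusNormedRing Matrix.frobeniusNormedAlgebra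

/-- Gelfand's formula turns the spectral bound into geometric decay of the powers. -/
lemma exists_eventually_norm_pow_le {n : ℕ} (A : Matrix (Fin n) (Fin n) ℂ)
    (hA : ∀ μ ∈ spectrum ℂ A, ‖μ‖ < 1) :
    ∃ r : NNReal, r < 1 ∧ ∀ᶠ k : ℕ in Filter.atTop, ‖A ^ k‖₊ ≤ r ^ k := by
  have hrad : spectralRadius ℂ A < (1 : NNReal) := by
    rcases (spectrum ℂ A).eq_empty_or_nonempty with h | h
    · simp [spectralRadius, h]
    · exact spectrum.spectralRadius_lt_of_forall_lt_of_nonempty h fun μ hμ => hA μ hμ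
  obtain ⟨r, hr, hr1⟩ := ENNReal.lt_iff_exists_nnreal_btwn.1 hrad
  refine ⟨r, by exact_mod_cast hr1, ?_⟩
  filter_upwards [(spectrum.pow_nnnorm_pow_one_div_tendsto_nhds_spectralRadius A).eventually_lt_const
    hr, Filter.eventually_ge_atTop 1] with k hk hk1
  have hk0 : (0 : ℝ) < k := by exact_mod_cast hk1
  have h := ENNReal.rpow_le_rpow hk.le hk0.le
  rw [← ENNReal.rpow_mul, one_div_mul_cancel hk0.ne', ENNReal.rpow_one,
    ENNReal.rpow_natCast] at h
  exact_mod_cast h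

lemma summable_gramian {n : ℕ} (F Q : Matrix (Fin n) (Fin n) ℝ)
    (hstab : ∀ μ ∈ spectrum ℂ (F.map (fun x => (x : ℂ))), ‖μ‖ < 1) :
    Summable (fun k : ℕ => (Fᵀ) ^ k * Q * F ^ k) := by
  obtain ⟨r, hr1, hr⟩ := exists_eventually_norm_pow_le _ hstab
  have hgeom : Summable fun k : ℕ => ‖Q‖ * ((r : ℝ) ^ 2) ^ k :=
    (summable_geometric_of_lt_one (by positivity)
      (pow_lt_one₀ r.2 (by exact_mod_cast hr1) two_ne_zero)).mul_left _
  refine Summable.of_norm_bounded_eventually_nat hgeom ?_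
  filter_upwards [hr] with k hk
  -- Passing to complex entries does not change the Frobenius norm.
  have hF : ‖F ^ k‖ ≤ (r : ℝ) ^ k := by
    have hmap : (F.map (fun x => (x : ℂ))) ^ k = (F ^ k).map (fun x => (x : ℂ)) :=
      (map_pow (Complex.ofRealHom.mapMatrix) F k).symm
    rw [hmap, Matrix.frobenius_nnnorm_map_eq _ _ (fun x => by simp)] at hk
    exact_mod_cast hk
  have hFt : ‖(Fᵀ) ^ k‖ ≤ (r : ℝ) ^ k := by
    rw [← Matrix.transpose_pow, Matrix.frobenius_norm_transpose]
    exact hF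
  calc ‖(Fᵀ) ^ k * Q * F ^ k‖ ≤ ‖(Fᵀ) ^ k‖ * ‖Q‖ * ‖F ^ k‖ :=
        (norm_mul_le _ _).trans (by gcongr; exact norm_mul_le _ _)
    _ ≤ (r : ℝ) ^ k * ‖Q‖ * (r : ℝ) ^ k := by gcongr
    _ = ‖Q‖ * ((r : ℝ) ^ 2) ^ k := by ring

end Decay

/-- **Positive definiteness of the observability Gramian.**
If every complex eigenvalue of `F` has modulus `< 1` and `(F, C̃)` is observable, then
`W = ∑_{k≥0} (Fᵀ)^k C̃ᵀ C̃ F^k` is summable, satisfies `W = Fᵀ W F + C̃ᵀ C̃`, and is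
symmetric positive definite. -/
theorem observability_gramian_posDef {n p : ℕ}
    (F : Matrix (Fin n) (Fin n) ℝ) (Ctil : Matrix (Fin p) (Fin n) ℝ)
    (hstab : ∀ μ ∈ spectrum ℂ (F.map (fun x => (x : ℂ))), ‖μ‖ < 1)
    (hobs : ∀ v : Fin n → ℝ, (∀ k : ℕ, (Ctil * F ^ k).mulVec v = 0) → v = 0) :
    Summable (fun k : ℕ => (Fᵀ) ^ k * (Ctilᵀ * Ctil) * F ^ k)
    ∧ (∑' k : ℕ, (Fᵀ) ^ k * (Ctilᵀ * Ctil) * F ^ k)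
        = Fᵀ * (∑' k : ℕ, (Fᵀ) ^ k * (Ctilᵀ * Ctil) * F ^ k) * F + Ctilᵀ * Ctil
    ∧ (∑' k : ℕ, (Fᵀ) ^ k * (Ctilᵀ * Ctil) * F ^ k).PosDef := by
  have hs := summable_gramian F (Ctilᵀ * Ctil) hstab
  refine ⟨hs, ?_, ?_⟩
  · rw [← hs.tsum_mul_left, ← (hs.mul_left _).tsum_mul_right, hs.tsum_eq_zero_add, add_comm]
    congr 1
    · refine tsum_congr fun k => ?_
      rw [pow_succ', pow_succ]
      simp only [Matrix.mul_assoc]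
    · simp
  · refine Matrix.PosDef.of_dotProduct_mulVec_pos ?_ fun v hv => ?_
    · rw [Matrix.IsHermitian, Matrix.conjTranspose_tsum]
      refine tsum_congr fun k => ?_
      simp [Matrix.conjTranspose_eq_transpose_of_trivial, Matrix.mul_assoc, Matrix.transpose_pow]
    -- The quadratic form is continuous in the matrix, so it can be evaluated termwise.
    · have hcont : Continuous fun M : Matrix (Fin n) (Fin n) ℝ => v ⬝ᵥ M *ᵥ v := by fun_prop
      let q : Matrix (Fin n) (Fin n) ℝ →+ ℝ :=
        { toFun := fun M => v ⬝ᵥ M *ᵥ v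
          map_zero' := by simp
          map_add' := fun M N => by simp [Matrix.add_mulVec, dotProduct_add] }
      have hq : HasSum (fun k : ℕ => (Ctil * F ^ k) *ᵥ v ⬝ᵥ (Ctil * F ^ k) *ᵥ v)
          (v ⬝ᵥ (∑' k : ℕ, (Fᵀ) ^ k * (Ctilᵀ * Ctil) * F ^ k) *ᵥ v) := by
        have hmap := hs.hasSum.map q hcont
        change HasSum _ (v ⬝ᵥ (∑' k : ℕ, (Fᵀ) ^ k * (Ctilᵀ * Ctil) * F ^ k) *ᵥ v) at hmap
        convert hmap using 2 with k
        have : (Fᵀ) ^ k * (Ctilᵀ * Ctil) * F ^ k = (Ctil * F ^ k)ᵀ * (Ctil * F ^ k) := by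
          simp [Matrix.mul_assoc, Matrix.transpose_pow]
        simp only [Function.comp, q, AddMonoidHom.coe_mk, ZeroHom.coe_mk]
        rw [this]
        generalize Ctil * F ^ k = B
        rw [← Matrix.mulVec_mulVec, Matrix.dotProduct_mulVec v, Matrix.vecMul_transpose]
      have hnn : ∀ k : ℕ, 0 ≤ (Ctil * F ^ k) *ᵥ v ⬝ᵥ (Ctil * F ^ k) *ᵥ v := fun k => by
        simpa using dotProduct_star_self_nonneg ((Ctil * F ^ k) *ᵥ v)
      obtain ⟨k, hk⟩ : ∃ k : ℕ, (Ctil * F ^ k) *ᵥ v ≠ 0 := by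
        by_contra! h
        exact hv (hobs v h)
      rw [star_trivial, ← hq.tsum_eq]
      exact hq.summable.tsum_pos hnn k
        ((hnn k).lt_of_ne' fun h => hk (dotProduct_self_eq_zero.1 h))
end

section
/- Explicit innovations loss in the spurious-stationary-point example. Let A = [[0, 1], [0, 0]], C = [1, 0] (a 1×2 matrix), Q_w = I₂, R_v = 1. For L = (l₁, l₂)^T ∈ ℝ^{2×1}, set F(L) := (I − L C) A and Q_η(L) := (I − L C) Q_w (I − L C)^T + L R_v L^T. Then: (i) every complex eigenvalue of F(L) has modulus < 1 if and only if |l₂| < 1; and (ii) if |l₂| < 1 and P is a symmetric real 2×2 matrix satisfying P = F(L) P F(L)^T + Q_η(L), then the (2,2) entry of P equals (1 + 2 l₂²)/(1 − l₂²), and consequently Tr(C A P A^T C^T) + Tr(C Q_w C^T) + Tr(R_v) = (1 + 2 l₂²)/(1 − l₂²) + 2, a quantity independent of l₁. -/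
/-!
Multiplying out gives `F(L) = [[0, 1 - l₁], [0, -l₂]]`, which is upper triangular, so its spectrum
is `{0, -l₂}` (`mem_spectrum_F`) and the eigenvalue criterion reads `|l₂| < 1`. Since the first
column of `F(L)` vanishes, the `(2,2)` entry of the Lyapunov equation involves only `P₂₂`: it is
`P₂₂ = l₂² P₂₂ + 1 + 2 l₂²`, which determines `P₂₂` when `l₂² < 1`. The trace term is
`C A P Aᵀ Cᵀ = P₂₂` because `C A = [0, 1]`.
-/

open Matrix

theorem F_eq (l₁ l₂ : ℝ) :
    (1 - (!![l₁; l₂] : Matrix (Fin 2) (Fin 1) ℝ) * !![(1 : ℝ), 0]) * !![(0 : ℝ), 1; 0, 0]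
      = !![0, 1 - l₁; 0, -l₂] := by
  ext i j
  fin_cases i <;> fin_cases j <;> simp [Matrix.mul_apply, Fin.sum_univ_two]

theorem mem_spectrum_F (l₁ l₂ : ℝ) (μ : ℂ) :
    μ ∈ spectrum ℂ ((!![0, 1 - l₁; 0, -l₂] : Matrix (Fin 2) (Fin 2) ℝ).map (fun x => (x : ℂ)))
      ↔ μ = 0 ∨ μ = -(l₂ : ℂ) := by
  rw [spectrum.mem_iff, Matrix.isUnit_iff_isUnit_det, isUnit_iff_ne_zero, not_not,
    Matrix.det_fin_two]
  simp [Matrix.algebraMap_matrix_apply, add_eq_zero_iff_eq_neg]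

/-- **Explicit innovations loss in the spurious-stationary-point example.**
For `A = [[0,1],[0,0]]`, `C = [1,0]`, `Q_w = I₂`, `R_v = 1` and `L = (l₁, l₂)ᵀ`:
(i) every complex eigenvalue of `F(L) = (I − L C) A` has modulus `< 1` iff `|l₂| < 1`; and
(ii) if `|l₂| < 1` and `P` is a symmetric solution of `P = F(L) P F(L)ᵀ + Q_η(L)`, then
`P₂₂ = (1 + 2 l₂²)/(1 − l₂²)` and
`Tr(C A P Aᵀ Cᵀ) + Tr(C Q_w Cᵀ) + Tr(R_v) = (1 + 2 l₂²)/(1 − l₂²) + 2`,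
a quantity independent of `l₁`. -/
theorem example_innovations_loss (l₁ l₂ : ℝ) :
    ((∀ μ ∈ spectrum ℂ
        ((((1 - (!![l₁; l₂] : Matrix (Fin 2) (Fin 1) ℝ) * !![(1 : ℝ), 0])
            * !![(0 : ℝ), 1; 0, 0]).map (fun x => (x : ℂ)))), ‖μ‖ < 1)
      ↔ |l₂| < 1)
    ∧ (|l₂| < 1 →
        ∀ P : Matrix (Fin 2) (Fin 2) ℝ, P.IsSymm →
          P = ((1 - !![l₁; l₂] * !![(1 : ℝ), 0]) * !![(0 : ℝ), 1; 0, 0]) * P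
                * ((1 - !![l₁; l₂] * !![(1 : ℝ), 0]) * !![(0 : ℝ), 1; 0, 0])ᵀ
              + ((1 - !![l₁; l₂] * !![(1 : ℝ), 0]) * (1 : Matrix (Fin 2) (Fin 2) ℝ)
                  * (1 - !![l₁; l₂] * !![(1 : ℝ), 0])ᵀ
                 + !![l₁; l₂] * (1 : Matrix (Fin 1) (Fin 1) ℝ) * (!![l₁; l₂])ᵀ) →
          P 1 1 = (1 + 2 * l₂ ^ 2) / (1 - l₂ ^ 2)
          ∧ (!![(1 : ℝ), 0] * !![(0 : ℝ), 1; 0, 0] * P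
                * (!![(0 : ℝ), 1; 0, 0])ᵀ * (!![(1 : ℝ), 0])ᵀ).trace
              + (!![(1 : ℝ), 0] * (1 : Matrix (Fin 2) (Fin 2) ℝ) * (!![(1 : ℝ), 0])ᵀ).trace
              + (1 : Matrix (Fin 1) (Fin 1) ℝ).trace
            = (1 + 2 * l₂ ^ 2) / (1 - l₂ ^ 2) + 2) := by
  rw [F_eq]
  refine ⟨?_, ?_⟩
  · simp [mem_spectrum_F]
  · intro h P _ hP
    have hlt : l₂ ^ 2 < 1 := (sq_lt_one_iff_abs_lt_one l₂).2 h
    have hne : 1 - l₂ ^ 2 ≠ 0 := by linarith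
    have h22 := congrFun (congrFun hP 1) 1
    have key : P 1 1 = (1 + 2 * l₂ ^ 2) / (1 - l₂ ^ 2) := by
      simp [Matrix.vecMul, dotProduct, Matrix.mul_apply, Fin.sum_univ_two] at h22
      rw [eq_div_iff hne]
      linear_combination h22
    refine ⟨key, ?_⟩
    rw [← key]
    simp [Matrix.trace, Matrix.vecMul, dotProduct, Matrix.mul_apply, Fin.sum_univ_two]
    ring
end

section
/- Spurious stationary points when (A, C A) is not observable. Let A = [[0, 1], [0, 0]], C = [1, 0] (a 1×2 matrix), Q_w = I₂, R_v = 1. For a stabilizing gain L ∈ ℝ^{2×1} (i.e., every complex eigenvalue of F(L) := (I − L C) A has modulus < 1), define P(L) := ∑_{k≥0} F(L)^k Q_η(L) (F(L)^T)^k with Q_η(L) := (I − L C) Q_w (I − L C)^T + L R_v L^T, the observability Gramian W_o(L) := ∑_{k≥0} (F(L)^T)^k A^T C^T C A F(L)^k, and K(L) := F(L) P(L) A^T C^T + (I − L C) Q_w C^T − L R_v. Then for every l₁ ∈ ℝ, the gain L = (l₁, 0)^T is stabilizing and satisfies W_o(L) K(L) = 0; i.e., every such L is a stationary point of the innovations loss.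 -/
/-!
For `L = (l₁, 0)ᵀ` one has `F(L) = [[0, 1 - l₁], [0, 0]]`, which is nilpotent, so its only
eigenvalue is `0` and `L` is stabilizing. Since `C A = [0, 1]` and `C A F(L) = 0`, the Gramian
is `W_o(L) = diag(0, 1)` (`exWo_eq`); it sees only the second entry of `K(L)`. That entry is
zero because the second row of `F(L)` and the second entries of `(I - L C) Cᵀ` and of `L`
all vanish (`exK_one`).
-/

open Matrix

noncomputable section

/-- `A = [[0,1],[0,0]]` in the spurious-stationary-point example. -/
def exA : Matrix (Fin 2) (Fin 2) ℝ := !![0, 1; 0, 0]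

/-- `C = [1, 0]` in the spurious-stationary-point example. -/
def exC : Matrix (Fin 1) (Fin 2) ℝ := !![1, 0]

/-- `F(L) = (I − L C) A`. -/
def exF (L : Matrix (Fin 2) (Fin 1) ℝ) : Matrix (Fin 2) (Fin 2) ℝ :=
  (1 - L * exC) * exA

/-- `Q_η(L) = (I − L C) Q_w (I − L C)ᵀ + L R_v Lᵀ` with `Q_w = I₂`, `R_v = 1`. -/
def exQeta (L : Matrix (Fin 2) (Fin 1) ℝ) : Matrix (Fin 2) (Fin 2) ℝ :=
  (1 - L * exC) * (1 : Matrix (Fin 2) (Fin 2) ℝ) * (1 - L * exC)ᵀ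
    + L * (1 : Matrix (Fin 1) (Fin 1) ℝ) * Lᵀ

/-- `P(L) = ∑_{k≥0} F(L)^k Q_η(L) (F(L)ᵀ)^k`. -/
def exP (L : Matrix (Fin 2) (Fin 1) ℝ) : Matrix (Fin 2) (Fin 2) ℝ :=
  ∑' k : ℕ, (exF L) ^ k * exQeta L * ((exF L)ᵀ) ^ k

/-- Observability Gramian `W_o(L) = ∑_{k≥0} (F(L)ᵀ)^k Aᵀ Cᵀ C A F(L)^k`. -/
def exWo (L : Matrix (Fin 2) (Fin 1) ℝ) : Matrix (Fin 2) (Fin 2) ℝ :=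
  ∑' k : ℕ, ((exF L)ᵀ) ^ k * (exAᵀ * exCᵀ * exC * exA) * (exF L) ^ k

/-- `K(L) = F(L) P(L) Aᵀ Cᵀ + (I − L C) Q_w Cᵀ − L R_v`. -/
def exK (L : Matrix (Fin 2) (Fin 1) ℝ) : Matrix (Fin 2) (Fin 1) ℝ :=
  exF L * exP L * exAᵀ * exCᵀ
    + (1 - L * exC) * (1 : Matrix (Fin 2) (Fin 2) ℝ) * exCᵀ
    - L * (1 : Matrix (Fin 1) (Fin 1) ℝ)

/-- With `L = (l₁, 0)ᵀ` the closed-loop matrix is strictly upper triangular. -/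
lemma exF_eq (l₁ : ℝ) : exF !![l₁; 0] = !![0, 1 - l₁; 0, 0] := by
  ext i j
  fin_cases i <;> fin_cases j <;>
    simp [exF, exA, exC, Matrix.mul_apply, Fin.sum_univ_two]

/-- Only the `k = 0` term of the Gramian series survives: `(CA)ᵀ CA = diag(0, 1)` and the
second row of `F` is zero, so the sum is genuine and not a junk value of `tsum`. -/
lemma exWo_eq (l₁ : ℝ) : exWo !![l₁; 0] = !![0, 0; 0, 1] := by
  have hCA : exAᵀ * exCᵀ * exC * exA = !![0, 0; 0, 1] := by
    ext i j
    fin_cases i <;> fin_cases j <;>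
      simp [exA, exC, Matrix.mul_apply, Fin.sum_univ_two]
  have hF : (!![0, 0; 0, 1] : Matrix (Fin 2) (Fin 2) ℝ) * exF !![l₁; 0] = 0 := by
    rw [exF_eq]
    ext i j
    fin_cases i <;> fin_cases j <;> simp [Matrix.mul_apply, Fin.sum_univ_two]
  unfold exWo
  rw [hCA, tsum_eq_single 0]
  · simp
  · intro k hk
    obtain ⟨m, rfl⟩ := Nat.exists_eq_succ_of_ne_zero hk
    rw [Nat.succ_eq_add_one, pow_succ' (exF _), mul_assoc, ← mul_assoc !![0, 0; 0, 1], hF,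
      zero_mul, mul_zero]

/-- The second row of `F` vanishes, so this entry does not depend on the value of `P(L)`. -/
lemma exK_one (l₁ : ℝ) : exK !![l₁; 0] 1 0 = 0 := by
  have hz : (![0, 0] : Fin 2 → ℝ) = 0 := by
    ext i
    fin_cases i <;> rfl
  unfold exK
  rw [exF_eq]
  simp [hz, exC, Matrix.mul_apply, Fin.sum_univ_two]

/-- **Spurious stationary points when `(A, C A)` is not observable.**
In the example `A = [[0,1],[0,0]]`, `C = [1,0]`, `Q_w = I₂`, `R_v = 1`, every gain
`L = (l₁, 0)ᵀ` is stabilizing and satisfies `W_o(L) K(L) = 0`, i.e. it is a stationary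
point of the innovations loss. -/
theorem spurious_stationary_points (l₁ : ℝ) :
    (∀ μ ∈ spectrum ℂ ((exF !![l₁; 0]).map (fun x => (x : ℂ))), ‖μ‖ < 1)
    ∧ exWo !![l₁; 0] * exK !![l₁; 0] = 0 := by
  constructor
  · intro μ hμ
    have hsq : (exF !![l₁; 0]).map (fun x => (x : ℂ)) ^ 2 = 0 := by
      rw [exF_eq, pow_two]
      ext i j
      fin_cases i <;> fin_cases j <;> simp [Matrix.mul_apply, Fin.sum_univ_two]
    have h := spectrum.pow_mem_pow _ 2 hμ
    rw [hsq, spectrum.zero_eq, Set.mem_singleton_iff] at h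
    simp [pow_eq_zero_iff (two_ne_zero) |>.mp h]
  · rw [exWo_eq]
    ext i j
    fin_cases i <;> fin_cases j <;> simp [Matrix.mul_apply, Fin.sum_univ_two, exK_one]

end
end
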